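/- arXiv:math/0304122 — 11 statements merged into one kernel-verified Lean document; each statement's English description precedes it below -/
import Mathlib

section
/- Let X be a set carrying an action of the group GL_N(ℂ) which is effective (i.e. if g • x = x for all x ∈ X then g is the identity matrix). Let A, B : X × ℂ × ℂ → GL_N(ℂ) be matrix-valued functions and suppose that the family of maps R(λ,μ) : X × X → X × X defined by R(λ,μ)(x,y) = (B(y,μ,λ)[x], A(x,λ,μ)[y]) satisfies the parameter-dependent Yang–Baxter relation R₂₃(μ,ν) R₁₃(λ,ν) R₁₂(λ,μ) = R₁₂(λ,μ) R₁₃(λ,ν) R₂₃(μ,ν) for all λ,μ,ν ∈ ℂ. Then A is a Lax matrix for R: for all λ, μ, ζ ∈ ℂ and all x, y ∈ X, if (x̃, ỹ) = R(λ,μ)(x,y), then A(x,λ,ζ) · A(y,μ,ζ) = A(ỹ,μ,ζ) · A(x̃,λ,ζ) in GL_N(ℂ). -/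
open Matrix

/-- The map acting as `f` on factors 1 and 2 of `X × X × X` and identically on factor 3. -/
def R12 {X : Type*} (f : X × X → X × X) : X × X × X → X × X × X :=
  fun p => ((f (p.1, p.2.1)).1, (f (p.1, p.2.1)).2, p.2.2)

/-- The map acting as `f` on factors 1 and 3 of `X × X × X` and identically on factor 2. -/
def R13 {X : Type*} (f : X × X → X × X) : X × X × X → X × X × X :=
  fun p => ((f (p.1, p.2.2)).1, p.2.1, (f (p.1, p.2.2)).2)

/-- The map acting as `f` on factors 2 and 3 of `X × X × X` and identically on factor 1. -/
def R23 {X : Type*} (f : X × X → X × X) : X × X × X → X × X × X :=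
  fun p => (p.1, (f (p.2.1, p.2.2)).1, (f (p.2.1, p.2.2)).2)

/-- If `GL N ℂ` acts effectively on `X` and the parameter-dependent family
`R(λ,μ)(x,y) = (B(y,μ,λ)[x], A(x,λ,μ)[y])` satisfies the Yang–Baxter relation
`R₂₃(μ,ν) R₁₃(λ,ν) R₁₂(λ,μ) = R₁₂(λ,μ) R₁₃(λ,ν) R₂₃(μ,ν)`, then `A` is a Lax
matrix for `R`. -/
theorem lax_matrix_A {N : ℕ} {X : Type*} [MulAction (GL (Fin N) ℂ) X]
    (heff : ∀ g : GL (Fin N) ℂ, (∀ x : X, g • x = x) → g = 1)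
    (A B : X → ℂ → ℂ → GL (Fin N) ℂ)
    (R : ℂ → ℂ → X × X → X × X)
    (hform : ∀ (lam mu : ℂ) (x y : X),
      R lam mu (x, y) = ((B y mu lam) • x, (A x lam mu) • y))
    (hYB : ∀ lam mu nu : ℂ,
      R23 (R mu nu) ∘ R13 (R lam nu) ∘ R12 (R lam mu)
        = R12 (R lam mu) ∘ R13 (R lam nu) ∘ R23 (R mu nu)) :
    ∀ (lam mu zeta : ℂ) (x y xt yt : X),
      (xt, yt) = R lam mu (x, y) →
      A x lam zeta * A y mu zeta = A yt mu zeta * A xt lam zeta := by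
  intro lam mu zeta x y xt yt h
  -- The third component of the Yang–Baxter relation at `(x, y, z)` says that both
  -- sides of the Lax equation act identically on every `z`.
  have key : ∀ z : X, (A yt mu zeta * A xt lam zeta) • z
      = (A x lam zeta * A y mu zeta) • z := by
    intro z
    have h3 := congrArg (fun p : X × X × X => p.2.2) (congrFun (hYB lam mu zeta) (x, y, z))
    simp only [Function.comp_apply, R12, R13, R23, ← h] at h3
    simpa only [hform, mul_smul] using h3
  have h1 := heff ((A yt mu zeta * A xt lam zeta)⁻¹ * (A x lam zeta * A y mu zeta)) (by
    intro z
    rw [mul_smul, ← key z, inv_smul_smul])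
  exact (inv_mul_eq_one.mp h1).symm
end

section
/- Let X be a set carrying an action of the group GL_N(ℂ) which is effective (i.e. if g • x = x for all x ∈ X then g is the identity matrix). Let A, B : X × ℂ × ℂ → GL_N(ℂ) be matrix-valued functions and suppose that the family of maps R(λ,μ) : X × X → X × X defined by R(λ,μ)(x,y) = (B(y,μ,λ)[x], A(x,λ,μ)[y]) satisfies the parameter-dependent Yang–Baxter relation R₂₃(μ,ν) R₁₃(λ,ν) R₁₂(λ,μ) = R₁₂(λ,μ) R₁₃(λ,ν) R₂₃(μ,ν) for all λ,μ,ν ∈ ℂ. Then the transpose of B is a Lax matrix for R: for all μ, ν, λ ∈ ℂ and all y, z ∈ X, if (ỹ, z̃) = R(μ,ν)(y,z), then B(z,ν,λ) · B(y,μ,λ) = B(ỹ,μ,λ) · B(z̃,ν,λ) in GL_N(ℂ) (equivalently, Bᵀ(x,λ,ζ) satisfies the Lax relation Bᵀ(y,μ,λ)Bᵀ(z,ν,λ) = Bᵀ(z̃,ν,λ)Bᵀ(ỹ,μ,λ)). -/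
/-!
The first factor is only ever acted on by values of `B`. Comparing the first components of the two
sides of the Yang–Baxter relation at `(x, y, z)` therefore gives
`B(z,ν,λ) B(y,μ,λ)[x] = B(ỹ,μ,λ) B(z̃,ν,λ)[x]`, where the four group elements do not depend on `x`.
Effectiveness of the action turns this into an identity in the group.
-/

open Matrix

/-- If `GL N ℂ` acts effectively on `X` and the parameter-dependent family
`R(λ,μ)(x,y) = (B(y,μ,λ)[x], A(x,λ,μ)[y])` satisfies the Yang–Baxter relation
`R₂₃(μ,ν) R₁₃(λ,ν) R₁₂(λ,μ) = R₁₂(λ,μ) R₁₃(λ,ν) R₂₃(μ,ν)`, then the transpose of `B` is a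
Lax matrix for `R`; equivalently, `B` satisfies the reversed product identity below. -/
theorem lax_matrix_B {N : ℕ} {X : Type*} [MulAction (GL (Fin N) ℂ) X]
    (heff : ∀ g : GL (Fin N) ℂ, (∀ x : X, g • x = x) → g = 1)
    (A B : X → ℂ → ℂ → GL (Fin N) ℂ)
    (R : ℂ → ℂ → X × X → X × X)
    (hform : ∀ (lam mu : ℂ) (x y : X),
      R lam mu (x, y) = ((B y mu lam) • x, (A x lam mu) • y))
    (hYB : ∀ lam mu nu : ℂ,
      R23 (R mu nu) ∘ R13 (R lam nu) ∘ R12 (R lam mu)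
        = R12 (R lam mu) ∘ R13 (R lam nu) ∘ R23 (R mu nu)) :
    ∀ (mu nu lam : ℂ) (y z yt zt : X),
      (yt, zt) = R mu nu (y, z) →
      B z nu lam * B y mu lam = B yt mu lam * B zt nu lam ∧
      ((B y mu lam : Matrix (Fin N) (Fin N) ℂ))ᵀ * ((B z nu lam : Matrix (Fin N) (Fin N) ℂ))ᵀ
        = ((B zt nu lam : Matrix (Fin N) (Fin N) ℂ))ᵀ
            * ((B yt mu lam : Matrix (Fin N) (Fin N) ℂ))ᵀ := by
  intro mu nu lam y z yt zt h
  rw [hform, Prod.mk.injEq] at h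
  obtain ⟨rfl, rfl⟩ := h
  have key : B z nu lam * B y mu lam
      = B (B z nu mu • y) mu lam * B (A y mu nu • z) nu lam := by
    rw [← inv_mul_eq_one]
    refine heff _ fun x => ?_
    -- The first component of the Yang–Baxter relation at `(x, y, z)`.
    have hx := congrArg Prod.fst (congrFun (hYB lam mu nu) (x, y, z))
    simp only [Function.comp_apply, R12, R13, R23, hform] at hx
    rw [mul_smul, inv_smul_eq_iff, mul_smul, mul_smul]
    exact hx.symm
  refine ⟨key, ?_⟩
  rw [← Matrix.transpose_mul, ← Matrix.transpose_mul, ← Units.val_mul, ← Units.val_mul, key]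
end

section
/- Let X be a set carrying a projective action of GL_N(ℂ), i.e. an action such that if g • x = x for all x ∈ X then g is a scalar matrix c·I with c ≠ 0. Let A, B : X × ℂ × ℂ → GL_N(ℂ) be matrix-valued functions and suppose that the family of maps R(λ,μ)(x,y) = (B(y,μ,λ)[x], A(x,λ,μ)[y]) satisfies the parameter-dependent Yang–Baxter relation R₂₃(μ,ν) R₁₃(λ,ν) R₁₂(λ,μ) = R₁₂(λ,μ) R₁₃(λ,ν) R₂₃(μ,ν) for all λ,μ,ν ∈ ℂ. Then A gives a projective Lax representation for R: for all λ, μ, ζ ∈ ℂ and all x, y ∈ X with (x̃, ỹ) = R(λ,μ)(x,y), there exists a nonzero scalar c ∈ ℂ such that A(x,λ,ζ) · A(y,μ,ζ) = c · A(ỹ,μ,ζ) · A(x̃,λ,ζ). -/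
/-!
Apply both sides of the Yang–Baxter relation to `(x, y, z)` and compare third components: `z` is
moved by `A(ỹ,μ,ζ) A(x̃,λ,ζ)` on the left and by `A(x,λ,ζ) A(y,μ,ζ)` on the right. As `z` is
arbitrary, the quotient of these two products acts trivially on `X`, so it is a nonzero scalar
matrix because the action is projective.
-/

open Matrix

/-- If `GL N ℂ` acts projectively on `X` (elements acting trivially are nonzero scalar
matrices) and the parameter-dependent family `R(λ,μ)(x,y) = (B(y,μ,λ)[x], A(x,λ,μ)[y])`
satisfies the Yang–Baxter relation, then `A` gives a projective Lax representation for `R`. -/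
theorem projective_lax_matrix_A {N : ℕ} {X : Type*} [MulAction (GL (Fin N) ℂ) X]
    (hproj : ∀ g : GL (Fin N) ℂ, (∀ x : X, g • x = x) →
      ∃ c : ℂ, c ≠ 0 ∧ (g : Matrix (Fin N) (Fin N) ℂ) = c • (1 : Matrix (Fin N) (Fin N) ℂ))
    (A B : X → ℂ → ℂ → GL (Fin N) ℂ)
    (R : ℂ → ℂ → X × X → X × X)
    (hform : ∀ (lam mu : ℂ) (x y : X),
      R lam mu (x, y) = ((B y mu lam) • x, (A x lam mu) • y))
    (hYB : ∀ lam mu nu : ℂ,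
      R23 (R mu nu) ∘ R13 (R lam nu) ∘ R12 (R lam mu)
        = R12 (R lam mu) ∘ R13 (R lam nu) ∘ R23 (R mu nu)) :
    ∀ (lam mu zeta : ℂ) (x y xt yt : X),
      (xt, yt) = R lam mu (x, y) →
      ∃ c : ℂ, c ≠ 0 ∧
        ((A x lam zeta : Matrix (Fin N) (Fin N) ℂ) * (A y mu zeta : Matrix (Fin N) (Fin N) ℂ))
          = c • ((A yt mu zeta : Matrix (Fin N) (Fin N) ℂ)
              * (A xt lam zeta : Matrix (Fin N) (Fin N) ℂ)) := by
  intro lam mu zeta x y xt yt h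
  rw [hform, Prod.mk.injEq] at h
  obtain ⟨rfl, rfl⟩ := h
  set xt := B y mu lam • x
  set yt := A x lam mu • y
  -- The third component of the Yang–Baxter relation at `(x, y, z)`, with third parameter `zeta`.
  have key : ∀ z : X, A yt mu zeta • A xt lam zeta • z = A x lam zeta • A y mu zeta • z := by
    intro z
    have h3 := congrArg (fun p => p.2.2) (congrFun (hYB lam mu zeta) (x, y, z))
    simpa only [Function.comp_apply, R12, R13, R23, hform] using h3
  obtain ⟨c, hc, hg⟩ :=
    hproj ((A yt mu zeta * A xt lam zeta)⁻¹ * (A x lam zeta * A y mu zeta)) (fun z => by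
      rw [mul_smul, inv_smul_eq_iff, mul_smul, mul_smul, key])
  refine ⟨c, hc, ?_⟩
  rw [← Units.val_mul, ← Units.val_mul,
    ← mul_inv_cancel_left (A yt mu zeta * A xt lam zeta) (A x lam zeta * A y mu zeta),
    Units.val_mul, hg, Matrix.mul_smul, Matrix.mul_one]
end

section
/- Let X be a set carrying a projective action of GL_N(ℂ), i.e. an action such that if g • x = x for all x ∈ X then g is a scalar matrix c·I with c ≠ 0. Let A, B : X × ℂ × ℂ → GL_N(ℂ) be matrix-valued functions and suppose that the family of maps R(λ,μ)(x,y) = (B(y,μ,λ)[x], A(x,λ,μ)[y]) satisfies the parameter-dependent Yang–Baxter relation R₂₃(μ,ν) R₁₃(λ,ν) R₁₂(λ,μ) = R₁₂(λ,μ) R₁₃(λ,ν) R₂₃(μ,ν) for all λ,μ,ν ∈ ℂ. Then Bᵀ gives a projective Lax representation for R: for all μ, ν, λ ∈ ℂ and all y, z ∈ X with (ỹ, z̃) = R(μ,ν)(y,z), there exists a nonzero scalar c ∈ ℂ such that B(z,ν,λ) · B(y,μ,λ) = c · B(ỹ,μ,λ) · B(z̃,ν,λ). -/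
open Matrix

/-- If `GL N ℂ` acts projectively on `X` (elements acting trivially are nonzero scalar
matrices) and the parameter-dependent family `R(λ,μ)(x,y) = (B(y,μ,λ)[x], A(x,λ,μ)[y])`
satisfies the Yang–Baxter relation, then `Bᵀ` gives a projective Lax representation for `R`. -/
theorem projective_lax_matrix_B {N : ℕ} {X : Type*} [MulAction (GL (Fin N) ℂ) X]
    (hproj : ∀ g : GL (Fin N) ℂ, (∀ x : X, g • x = x) →
      ∃ c : ℂ, c ≠ 0 ∧ (g : Matrix (Fin N) (Fin N) ℂ) = c • (1 : Matrix (Fin N) (Fin N) ℂ))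
    (A B : X → ℂ → ℂ → GL (Fin N) ℂ)
    (R : ℂ → ℂ → X × X → X × X)
    (hform : ∀ (lam mu : ℂ) (x y : X),
      R lam mu (x, y) = ((B y mu lam) • x, (A x lam mu) • y))
    (hYB : ∀ lam mu nu : ℂ,
      R23 (R mu nu) ∘ R13 (R lam nu) ∘ R12 (R lam mu)
        = R12 (R lam mu) ∘ R13 (R lam nu) ∘ R23 (R mu nu)) :
    ∀ (mu nu lam : ℂ) (y z yt zt : X),
      (yt, zt) = R mu nu (y, z) →
      ∃ c : ℂ, c ≠ 0 ∧
        ((B z nu lam : Matrix (Fin N) (Fin N) ℂ) * (B y mu lam : Matrix (Fin N) (Fin N) ℂ))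
          = c • ((B yt mu lam : Matrix (Fin N) (Fin N) ℂ)
              * (B zt nu lam : Matrix (Fin N) (Fin N) ℂ)) := by
  intro mu nu lam y z yt zt h
  -- Evaluated at `(x, y, z)`, the first component of the Yang–Baxter relation says that both
  -- products of `B`-matrices act on `x` in the same way.
  have key : ∀ x : X, (B z nu lam * B y mu lam) • x = (B yt mu lam * B zt nu lam) • x := by
    intro x
    have e := congrArg Prod.fst (congrFun (hYB lam mu nu) (x, y, z))
    simpa only [Function.comp_apply, R12, R13, R23, ← h, hform, mul_smul] using e
  obtain ⟨c, hc, hg⟩ := hproj ((B yt mu lam * B zt nu lam)⁻¹ * (B z nu lam * B y mu lam))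
    fun x => by rw [mul_smul, key, inv_smul_smul]
  refine ⟨c, hc, ?_⟩
  rw [← Units.val_mul, ← Units.val_mul,
    ← mul_inv_cancel_left (B yt mu lam * B zt nu lam) (B z nu lam * B y mu lam),
    Units.val_mul, hg, mul_smul_comm, mul_one]
end

section
/- The Adler map satisfies the parameter-dependent Yang–Baxter relation: let λ, μ, ν ∈ ℂ and x, y, z ∈ ℂ, and define successively (x₂, y₁) = R(λ,μ)(x,y), (x₂₃, z₁) = R(λ,ν)(x₂,z), (y₁₃, z₁₂) = R(μ,ν)(y₁,z₁) along one chain, and (y₃, z₂) = R(μ,ν)(y,z), (x₃, z₁₂′) = R(λ,ν)(x,z₂), (x₂₃′, y₁₃′) = R(λ,μ)(x₃,y₃) along the other chain, assuming that all sums appearing in denominators (x+y, x₂+z, y₁+z₁, y+z, x+z₂, x₃+y₃) are nonzero. Then x₂₃ = x₂₃′, y₁₃ = y₁₃′ and z₁₂ = z₁₂′. -/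
/-!
The Adler map preserves the sum of its arguments, so both chains preserve `x + y + z`, and it is
enough to compare `x₂₃` and `z₁₂` along the two chains.

Put `a = x + y`, `b = y + z`, `d = λ − μ`, `e = μ − ν`, and let `p = x₂ + z`, `q = x + z₂` be the
second denominators of the two chains. Then `a p = a b − d` and `b q = a b + e`, and the third
denominators are `y₁ + z₁ = b q / p` and `x₃ + y₃ = a p / q`. In these terms each of the two
comparisons reduces to `(d + e) a b = e (a p) + d (b q)`, which follows from the expressions
for `a p` and `b q`.
-/

/-- The Adler map `R(λ,μ)(x,y) = (y − (λ−μ)/(x+y), x − (μ−λ)/(x+y))`. -/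
noncomputable def adler (lam mu x y : ℂ) : ℂ × ℂ :=
  (y - (lam - mu) / (x + y), x - (mu - lam) / (x + y))

/-- The Adler map satisfies the parameter-dependent Yang–Baxter relation
`R₂₃(μ,ν) R₁₃(λ,ν) R₁₂(λ,μ) = R₁₂(λ,μ) R₁₃(λ,ν) R₂₃(μ,ν)`, wherever all the
denominators involved are nonzero. -/
theorem adler_yang_baxter (lam mu nu x y z : ℂ)
    (x2 y1 x23 z1 y13 z12 y3 z2 x3 z12' x23' y13' : ℂ)
    (h1 : x + y ≠ 0) (e1 : (x2, y1) = adler lam mu x y)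
    (h2 : x2 + z ≠ 0) (e2 : (x23, z1) = adler lam nu x2 z)
    (h3 : y1 + z1 ≠ 0) (e3 : (y13, z12) = adler mu nu y1 z1)
    (h4 : y + z ≠ 0) (e4 : (y3, z2) = adler mu nu y z)
    (h5 : x + z2 ≠ 0) (e5 : (x3, z12') = adler lam nu x z2)
    (h6 : x3 + y3 ≠ 0) (e6 : (x23', y13') = adler lam mu x3 y3) :
    x23 = x23' ∧ y13 = y13' ∧ z12 = z12' := by
  simp only [adler, Prod.mk.injEq] at e1 e2 e3 e4 e5 e6
  obtain ⟨ex2, ey1⟩ := e1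
  obtain ⟨ex23, ez1⟩ := e2
  obtain ⟨ey13, ez12⟩ := e3
  obtain ⟨ey3, ez2⟩ := e4
  obtain ⟨ex3, ez12'⟩ := e5
  obtain ⟨ex23', ey13'⟩ := e6
  have s12 : x2 + y1 = x + y := by rw [ex2, ey1]; ring
  have s13 : x23 + z1 = x2 + z := by rw [ex23, ez1]; ring
  have s23 : y13 + z12 = y1 + z1 := by rw [ey13, ez12]; ring
  have t23 : y3 + z2 = y + z := by rw [ey3, ez2]; ring
  have t13 : x3 + z12' = x + z2 := by rw [ex3, ez12']; ring
  have t12 : x23' + y13' = x3 + y3 := by rw [ex23', ey13']; ring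
  have hp : (x + y) * (x2 + z) = (x + y) * (y + z) - (lam - mu) := by
    rw [ex2]; field_simp; ring
  have hq : (y + z) * (x + z2) = (x + y) * (y + z) + (mu - nu) := by
    rw [ez2]; field_simp; ring
  have hr : y1 + z1 = (y + z) * (x + z2) / (x2 + z) := by
    have h : y1 + z1 = x + y + (lam - nu) / (x2 + z) := by
      rw [ez1]; linear_combination s12
    rw [h, eq_div_iff h2, add_mul, div_mul_cancel₀ _ h2]
    linear_combination hp - hq
  have ht : x3 + y3 = (x + y) * (x2 + z) / (x + z2) := by
    have h : x3 + y3 = y + z - (lam - nu) / (x + z2) := by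
      rw [ex3]; linear_combination t23
    rw [h, eq_div_iff h5, sub_mul, div_mul_cancel₀ _ h5]
    linear_combination hq - hp
  have key : (lam - nu) * ((x + y) * (y + z)) =
      (mu - nu) * ((x + y) * (x2 + z)) + (lam - mu) * ((y + z) * (x + z2)) := by
    rw [hp, hq]; ring
  have hx : x23 = x23' := by
    have h : (lam - nu) / (x2 + z) = (mu - nu) / (y + z) + (lam - mu) / (x3 + y3) := by
      rw [ht]
      generalize x2 + z = p at *
      generalize x + z2 = q at *
      generalize x + y = a at *
      generalize y + z = b at *
      field_simp
      linear_combination key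
    rw [ex23, ex23', h]; linear_combination -ey3
  have hz : z12 = z12' := by
    have h : (lam - nu) / (x + z2) = (lam - mu) / (x + y) + (mu - nu) / (y1 + z1) := by
      rw [hr]
      generalize x2 + z = p at *
      generalize x + z2 = q at *
      generalize x + y = a at *
      generalize y + z = b at *
      field_simp
      linear_combination key
    rw [ez12, ez12']; linear_combination ey1 - h
  exact ⟨hx, by linear_combination s12 + s13 + s23 - t12 - t13 - t23 - hx - hz, hz⟩
end

section
/- The 2×2 matrix A(x,λ;ζ) = [[x, x² + λ − ζ], [1, x]] is a Lax matrix for the Adler map: for all λ, μ, ζ ∈ ℂ and x, y ∈ ℂ with x + y ≠ 0, setting x̃ = y − (λ−μ)/(x+y) and ỹ = x − (μ−λ)/(x+y), one has the matrix identity A(x,λ;ζ) · A(y,μ;ζ) = A(ỹ,μ;ζ) · A(x̃,λ;ζ). -/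
/-- The Lax matrix `A(x,λ;ζ) = [[x, x² + λ − ζ], [1, x]]` for the Adler map. -/
noncomputable def adlerLax (x lam zeta : ℂ) : Matrix (Fin 2) (Fin 2) ℂ :=
  !![x, x ^ 2 + lam - zeta; 1, x]

/-- `A(x,λ;ζ) = [[x, x² + λ − ζ], [1, x]]` is a Lax matrix for the Adler map:
if `(x̃,ỹ) = R(λ,μ)(x,y)` then `A(x,λ;ζ) A(y,μ;ζ) = A(ỹ,μ;ζ) A(x̃,λ;ζ)`. -/
theorem adler_lax (lam mu zeta x y : ℂ) (h : x + y ≠ 0)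
    (xt yt : ℂ)
    (hx : xt = y - (lam - mu) / (x + y))
    (hy : yt = x - (mu - lam) / (x + y)) :
    adlerLax x lam zeta * adlerLax y mu zeta
      = adlerLax yt mu zeta * adlerLax xt lam zeta := by
  -- With `d = (λ - μ) / (x + y)` one has `x̃ = y - d`, `ỹ = x + d`, and every entry of the
  -- identity follows from the single relation `d * (x + y) = λ - μ`.
  obtain ⟨d, hd⟩ : ∃ d, d = (lam - mu) / (x + y) := ⟨_, rfl⟩
  have hds : d * (x + y) = lam - mu := by rw [hd, div_mul_cancel₀ _ h]
  have hx' : xt = y - d := by rw [hx, hd]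
  have hy' : yt = x + d := by rw [hy, hd]; ring
  subst hx' hy'
  ext i j
  fin_cases i <;> fin_cases j <;> simp [adlerLax, Matrix.mul_apply, Fin.sum_univ_two]
  · linear_combination -hds
  · linear_combination (x + d - y) * hds
  · linear_combination hds
end

section
/- The matrix-KdV two-soliton map satisfies the Yang–Baxter relation at the level of rank-one projectors: let λ₁, λ₂, λ₃ ∈ ℂ be pairwise distinct and let (ξ₁,η₁), (ξ₂,η₂), (ξ₃,η₃) ∈ ℂ^N × (ℂ^N)* be three pairs. Apply R₁₂(λ₁,λ₂), then R₁₃(λ₁,λ₃), then R₂₃(λ₂,λ₃) to the triple along one chain, and R₂₃(λ₂,λ₃), then R₁₃(λ₁,λ₃), then R₁₂(λ₁,λ₂) along the other chain, where R_ij applies the two-soliton map R(λ_i,λ_j) to the pairs in slots i and j, assuming all pairings ⟨ξ,η⟩ appearing in denominators along both chains are nonzero. Then, for each of the three slots, the rank-one projectors ξ⊗η/⟨ξ,η⟩ built from the final outputs of the two chains coincide. -/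
/-!
Let `Aᵢ(m) = I + (2 λᵢ / (m - λᵢ)) Pᵢ` be the elementary dressing factor of the `i`-th soliton. The
map `R(λ₁,λ₂)` sends `ξ₁` to `A₂(λ₁) ξ₁` and `ξ₂` to `A₁(λ₂) ξ₂`, and acts in the same way on the
covectors, by right multiplication (`kdvR_eq`). Every statement about the vectors therefore yields the
one about the covectors by interchanging the two families.

Slots 1 and 3. The map solves the refactorization problem `Ã₂(m) Ã₁(m) = A₁(m) A₂(m)`
(`dress_exchange`). At the end of the first chain the third vector is `Ã₂(λ₃) Ã₁(λ₃) ξ₃`, at the end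
of the second it is `A₁(λ₃) A₂(λ₃) ξ₃`, so the two are equal; slot 1 is the same with the labels
1 and 3 exchanged.

Slot 2. Here the two final vectors are only proportional. Multiplying the one from the first chain by
the pairing of the intermediate pair in slot 3 clears the denominators that depend on off-diagonal
pairings and leaves `⟨ξ₃,η₃⟩` times a vector `middle` (`smul_dress_eq_middle`) that is invariant under
exchanging the labels 1 and 3 (`middle_symm`). Since this exchange swaps the two chains, both vectors
are nonzero multiples of `middle`; the covectors are the same multiples of its analogue with the two
families interchanged, and projectors do not see the scalars (`kdvProj_eq_of_smul`). The argument is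
a rational identity and needs no invertibility of the `Aᵢ(λⱼ)`, so it includes `λᵢ + λⱼ = 0`.
-/

open Matrix

/-- The rank-one projector `P = (ξ⊗η)/⟨ξ,η⟩` associated to a vector `ξ` and a covector `η`. -/
noncomputable def kdvProj {N : ℕ} (ξ η : Fin N → ℂ) : Matrix (Fin N) (Fin N) ℂ :=
  (ξ ⬝ᵥ η)⁻¹ • vecMulVec ξ η

/-- The matrix-KdV two-soliton interaction map
`R(λ₁,λ₂) : (ξ₁,η₁;ξ₂,η₂) ↦ (ξ̃₁,η̃₁;ξ̃₂,η̃₂)`. -/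
noncomputable def kdvR {N : ℕ} (l1 l2 : ℂ) (ξ1 η1 ξ2 η2 : Fin N → ℂ) :
    ((Fin N → ℂ) × (Fin N → ℂ)) × ((Fin N → ℂ) × (Fin N → ℂ)) :=
  ((ξ1 + (2 * l2 * (ξ1 ⬝ᵥ η2) / ((l1 - l2) * (ξ2 ⬝ᵥ η2))) • ξ2,
    η1 + (2 * l2 * (ξ2 ⬝ᵥ η1) / ((l1 - l2) * (ξ2 ⬝ᵥ η2))) • η2),
   (ξ2 + (2 * l1 * (ξ2 ⬝ᵥ η1) / ((l2 - l1) * (ξ1 ⬝ᵥ η1))) • ξ1,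
    η2 + (2 * l1 * (ξ1 ⬝ᵥ η2) / ((l2 - l1) * (ξ1 ⬝ᵥ η1))) • η1))

/-- The action on a vector `v`, at spectral parameter `m`, of the elementary dressing factor
`I + (2 l / (m - l)) P` with `P = (ξ⊗η)/⟨ξ,η⟩`. As vectors and covectors are both functions on
`Fin N`, the right action of the same factor on a covector `w` is `dress m l w η ξ`. -/
noncomputable def dress {N : ℕ} (m l : ℂ) (v ξ η : Fin N → ℂ) : Fin N → ℂ :=
  v + (2 * l * (v ⬝ᵥ η) / ((m - l) * (ξ ⬝ᵥ η))) • ξ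

lemma dress_dot {N : ℕ} (m l : ℂ) (v ξ η w : Fin N → ℂ) :
    dress m l v ξ η ⬝ᵥ w = v ⬝ᵥ w + 2 * l * (v ⬝ᵥ η) / ((m - l) * (ξ ⬝ᵥ η)) * (ξ ⬝ᵥ w) := by
  simp [dress, add_dotProduct, smul_dotProduct]

/-- Here `dress` acts on a covector, so the roles of `ξ` and `η` are interchanged. -/
lemma dot_dress {N : ℕ} (m l : ℂ) (v ξ η w : Fin N → ℂ) :
    w ⬝ᵥ dress m l v η ξ = w ⬝ᵥ v + 2 * l * (ξ ⬝ᵥ v) / ((m - l) * (ξ ⬝ᵥ η)) * (w ⬝ᵥ η) := by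
  rw [dotProduct_comm, dress_dot, dotProduct_comm v w, dotProduct_comm v ξ, dotProduct_comm η ξ,
    dotProduct_comm η w]

lemma kdvR_eq {N : ℕ} (l1 l2 : ℂ) (ξ1 η1 ξ2 η2 : Fin N → ℂ) :
    kdvR l1 l2 ξ1 η1 ξ2 η2 =
      ((dress l1 l2 ξ1 ξ2 η2, dress l1 l2 η1 η2 ξ2),
       (dress l2 l1 ξ2 ξ1 η1, dress l2 l1 η2 η1 ξ1)) := by
  simp only [kdvR, dress, dotProduct_comm η1 ξ2, dotProduct_comm η2 ξ2, dotProduct_comm η2 ξ1,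
    dotProduct_comm η1 ξ1]

lemma pairing_dress {N : ℕ} {m l : ℂ} (h : m ≠ l) (v w ξ η : Fin N → ℂ) (hp : ξ ⬝ᵥ η ≠ 0) :
    dress m l v ξ η ⬝ᵥ dress m l w η ξ =
      ((m - l) ^ 2 * (v ⬝ᵥ w) * (ξ ⬝ᵥ η) + 4 * m * l * (v ⬝ᵥ η) * (ξ ⬝ᵥ w)) /
        ((m - l) ^ 2 * (ξ ⬝ᵥ η)) := by
  have h' := sub_ne_zero.2 h
  simp only [dress_dot, dot_dress]
  field_simp
  ring

/-- For the output `(ξ̃₁,η̃₁), (ξ̃₂,η̃₂)` of the two-soliton map, the dressing factors satisfy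
`Ã₂(m) Ã₁(m) = A₁(m) A₂(m)`, where `Aᵢ(m) = I + (2 lᵢ / (m - lᵢ)) Pᵢ`. -/
lemma dress_exchange {N : ℕ} {m l1 l2 : ℂ} (h12 : l1 ≠ l2) (hm1 : m ≠ l1) (hm2 : m ≠ l2)
    (v ξ1 η1 ξ2 η2 : Fin N → ℂ) (hp1 : ξ1 ⬝ᵥ η1 ≠ 0) (hp2 : ξ2 ⬝ᵥ η2 ≠ 0)
    (hp1a : dress l1 l2 ξ1 ξ2 η2 ⬝ᵥ dress l1 l2 η1 η2 ξ2 ≠ 0) :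
    dress m l2 (dress m l1 v (dress l1 l2 ξ1 ξ2 η2) (dress l1 l2 η1 η2 ξ2))
        (dress l2 l1 ξ2 ξ1 η1) (dress l2 l1 η2 η1 ξ1) =
      dress m l1 (dress m l2 v ξ2 η2) ξ1 η1 := by
  have a1 := sub_ne_zero.2 h12
  have a2 := sub_ne_zero.2 hm1
  have a3 := sub_ne_zero.2 hm2
  have hneg : l2 - l1 = -(l1 - l2) := by ring
  obtain ⟨D, hD⟩ : ∃ D, D = (l1 - l2) ^ 2 * (ξ1 ⬝ᵥ η1) * (ξ2 ⬝ᵥ η2) +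
    4 * l1 * l2 * (ξ1 ⬝ᵥ η2) * (ξ2 ⬝ᵥ η1) := ⟨_, rfl⟩
  have e1 := pairing_dress h12 ξ1 η1 ξ2 η2 hp2
  rw [← hD] at e1
  have hD0 : D ≠ 0 := by
    rintro rfl
    exact hp1a (by rw [e1, zero_div])
  have e2 : dress l2 l1 ξ2 ξ1 η1 ⬝ᵥ dress l2 l1 η2 η1 ξ1 = D / ((l1 - l2) ^ 2 * (ξ1 ⬝ᵥ η1)) := by
    rw [pairing_dress h12.symm _ _ _ _ hp1, hneg, neg_sq, hD]
    congr 1; ring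
  ext i
  rw [dress, dress, e2, e1]
  simp only [add_dotProduct, smul_dotProduct, dress,
    Pi.add_apply, Pi.smul_apply, smul_eq_mul, dotProduct_add, dotProduct_smul,
    dotProduct_comm η1 ξ2, dotProduct_comm η2 ξ2, dotProduct_comm η2 ξ1,
    dotProduct_comm η1 ξ1, hneg]
  clear e1 e2 hp1a
  generalize ξ1 ⬝ᵥ η1 = u11 at *
  generalize ξ1 ⬝ᵥ η2 = u12 at *
  generalize ξ2 ⬝ᵥ η1 = u21 at *
  generalize ξ2 ⬝ᵥ η2 = u22 at *
  generalize v ⬝ᵥ η1 = v1 at *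
  generalize v ⬝ᵥ η2 = v2 at *
  generalize ξ1 i = x1
  generalize ξ2 i = x2
  generalize v i = x
  field_simp
  rw [hD]
  ring

/-- The mixed pairing `⟨ξ̃₂,η̃₁⟩` after an interaction is a multiple of `⟨ξ̃₁,η̃₁⟩`. This is what
keeps the square of `⟨ξ̃₁,η̃₁⟩` out of the denominators in `smul_dress_eq_middle`. -/
lemma dress_cross {N : ℕ} {l1 l2 : ℂ} (h12 : l1 ≠ l2) (ξ1 η1 ξ2 η2 : Fin N → ℂ)
    (hp1 : ξ1 ⬝ᵥ η1 ≠ 0) (hp2 : ξ2 ⬝ᵥ η2 ≠ 0) :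
    dress l2 l1 ξ2 ξ1 η1 ⬝ᵥ dress l1 l2 η1 η2 ξ2 =
      -((ξ2 ⬝ᵥ η1) / (ξ1 ⬝ᵥ η1)) *
        (dress l1 l2 ξ1 ξ2 η2 ⬝ᵥ dress l1 l2 η1 η2 ξ2) := by
  have a1 := sub_ne_zero.2 h12
  have hneg : l2 - l1 = -(l1 - l2) := by ring
  simp only [dress_dot, dot_dress, hneg]
  field_simp
  ring

/-- The common direction of the second vector at the end of both chains, written in terms of the
initial data and normalised so as to be visibly invariant under exchanging slots 1 and 3.
The scalar `p` is the pairing of `ξ₃` with the image of `η₁` under its interaction with slot 2, and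
`q` that of `ξ₁` with the image of `η₃`. -/
noncomputable def middle {N : ℕ} (l1 l2 l3 : ℂ) (ξ1 η1 ξ2 η2 ξ3 η3 : Fin N → ℂ) : Fin N → ℂ :=
  let p := ξ3 ⬝ᵥ dress l1 l2 η1 η2 ξ2
  let q := ξ1 ⬝ᵥ dress l3 l2 η3 η2 ξ2
  (1 + 4 * l1 * l3 / (l1 - l3) ^ 2 * (p * q / ((ξ1 ⬝ᵥ η1) * (ξ3 ⬝ᵥ η3)))) • ξ2 +
    ((2 * l1 / (l2 - l1) * ((ξ2 ⬝ᵥ η1) / (ξ1 ⬝ᵥ η1)) +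
      4 * l1 * l3 / ((l2 - l3) * (l3 - l1)) *
        ((ξ2 ⬝ᵥ η3) * p / ((ξ1 ⬝ᵥ η1) * (ξ3 ⬝ᵥ η3)))) • ξ1 +
    (2 * l3 / (l2 - l3) * ((ξ2 ⬝ᵥ η3) / (ξ3 ⬝ᵥ η3)) +
      4 * l3 * l1 / ((l2 - l1) * (l1 - l3)) *
        ((ξ2 ⬝ᵥ η1) * q / ((ξ1 ⬝ᵥ η1) * (ξ3 ⬝ᵥ η3)))) • ξ3)

lemma middle_symm {N : ℕ} (l1 l2 l3 : ℂ) (ξ1 η1 ξ2 η2 ξ3 η3 : Fin N → ℂ) :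
    middle l3 l2 l1 ξ3 η3 ξ2 η2 ξ1 η1 = middle l1 l2 l3 ξ1 η1 ξ2 η2 ξ3 η3 := by
  ext i
  simp only [middle, Pi.add_apply, Pi.smul_apply, smul_eq_mul]
  rw [← neg_sub l1 l3, neg_sq]
  ring

/-- Up to scalars, the second vector produced by the chain `R₁₂`, `R₁₃`, `R₂₃` is `middle`. Exchanging
the labels 1 and 3 turns this chain into the opposite one, so the lemma covers both. -/
lemma smul_dress_eq_middle {N : ℕ} {l1 l2 l3 : ℂ} (h12 : l1 ≠ l2) (h13 : l1 ≠ l3) (h23 : l2 ≠ l3)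
    (ξ1 η1 ξ2 η2 ξ3 η3 ξ1a η1a ξ2a ξ3a η3a : Fin N → ℂ)
    (hp1 : ξ1 ⬝ᵥ η1 ≠ 0) (hp2 : ξ2 ⬝ᵥ η2 ≠ 0) (hp3 : ξ3 ⬝ᵥ η3 ≠ 0)
    (hξ1a : ξ1a = dress l1 l2 ξ1 ξ2 η2) (hη1a : η1a = dress l1 l2 η1 η2 ξ2)
    (hξ2a : ξ2a = dress l2 l1 ξ2 ξ1 η1)
    (hξ3a : ξ3a = dress l3 l1 ξ3 ξ1a η1a) (hη3a : η3a = dress l3 l1 η3 η1a ξ1a)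
    (hp1a : ξ1a ⬝ᵥ η1a ≠ 0) (hp3a : ξ3a ⬝ᵥ η3a ≠ 0) :
    (ξ3a ⬝ᵥ η3a) • dress l2 l3 ξ2a ξ3a η3a =
      (ξ3 ⬝ᵥ η3) • middle l1 l2 l3 ξ1 η1 ξ2 η2 ξ3 η3 := by
  have a12 := sub_ne_zero.2 h12
  have a13 := sub_ne_zero.2 h13
  have a23 := sub_ne_zero.2 h23
  have n21 : l2 - l1 = -(l1 - l2) := by ring
  have n31 : l3 - l1 = -(l1 - l3) := by ring
  have n32 : l3 - l2 = -(l2 - l3) := by ring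
  have e3 := pairing_dress h13.symm ξ3 η3 ξ1a η1a hp1a
  rw [← hξ3a, ← hη3a] at e3
  have hc : ξ2a ⬝ᵥ η1a = -((ξ2 ⬝ᵥ η1) / (ξ1 ⬝ᵥ η1)) * (ξ1a ⬝ᵥ η1a) := by
    rw [hξ1a, hη1a, hξ2a]; exact dress_cross h12 _ _ _ _ hp1 hp2
  have e23 : ξ2a ⬝ᵥ η3a = ξ2a ⬝ᵥ η3 +
      2 * l1 / (l3 - l1) * (ξ1a ⬝ᵥ η3) * (-((ξ2 ⬝ᵥ η1) / (ξ1 ⬝ᵥ η1))) := by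
    rw [hη3a, dot_dress, hc]
    rw [n31]
    field_simp
  have hA : ξ1a ⬝ᵥ η1a =
      ((l1 - l2) ^ 2 * (ξ1 ⬝ᵥ η1) * (ξ2 ⬝ᵥ η2) + 4 * l1 * l2 * (ξ1 ⬝ᵥ η2) * (ξ2 ⬝ᵥ η1)) /
       ((l1 - l2) ^ 2 * (ξ2 ⬝ᵥ η2)) := by
    rw [hξ1a, hη1a, pairing_dress h12 _ _ _ _ hp2]
  have hs : (ξ3a ⬝ᵥ η3a) • dress l2 l3 ξ2a ξ3a η3a =
      (ξ3a ⬝ᵥ η3a) • ξ2a + (2 * l3 / (l2 - l3) * (ξ2a ⬝ᵥ η3a)) • ξ3a := by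
    rw [dress, smul_add, smul_smul]
    congr 2
    field_simp
  rw [hs, e3, e23, hξ3a]
  clear hs e3 e23 hξ3a hη3a hc hp3a
  ext i
  have ex1 : ξ1a i = ξ1 i + 2 * l2 * (ξ1 ⬝ᵥ η2) / ((l1 - l2) * (ξ2 ⬝ᵥ η2)) * ξ2 i := by
    rw [hξ1a]; rfl
  have ex2 : ξ2a i = ξ2 i + 2 * l1 * (ξ2 ⬝ᵥ η1) / ((l2 - l1) * (ξ1 ⬝ᵥ η1)) * ξ1 i := by
    rw [hξ2a]; rfl
  have eX : ξ3 ⬝ᵥ η1a = ξ3 ⬝ᵥ dress l1 l2 η1 η2 ξ2 := by rw [hη1a]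
  have eY : ξ1a ⬝ᵥ η3 = ξ1 ⬝ᵥ η3 + 2 * l2 * (ξ1 ⬝ᵥ η2) / ((l1 - l2) * (ξ2 ⬝ᵥ η2)) * (ξ2 ⬝ᵥ η3) := by
    rw [hξ1a, dress_dot]
  have eZ : ξ2a ⬝ᵥ η3 = ξ2 ⬝ᵥ η3 + 2 * l1 * (ξ2 ⬝ᵥ η1) / ((l2 - l1) * (ξ1 ⬝ᵥ η1)) * (ξ1 ⬝ᵥ η3) := by
    rw [hξ2a, dress_dot]
  have ex3 : dress l3 l1 ξ3 ξ1a η1a i =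
      ξ3 i + 2 * l1 * (ξ3 ⬝ᵥ η1a) / ((l3 - l1) * (ξ1a ⬝ᵥ η1a)) * ξ1a i := rfl
  simp only [middle, Pi.add_apply, Pi.smul_apply, smul_eq_mul]
  rw [ex3, ex1, ex2, eX, eY, eZ]
  simp only [dot_dress]
  clear ex1 ex2 ex3 eX eY eZ hη1a hξ1a hξ2a
  obtain ⟨D, hD⟩ : ∃ D, D = (l1 - l2) ^ 2 * (ξ1 ⬝ᵥ η1) * (ξ2 ⬝ᵥ η2) +
    4 * l1 * l2 * (ξ1 ⬝ᵥ η2) * (ξ2 ⬝ᵥ η1) := ⟨_, rfl⟩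
  rw [← hD] at hA
  have hD0 : D ≠ 0 := by
    rintro rfl
    exact hp1a (by rw [hA, zero_div])
  rw [hA, n21, n31, n32]
  clear hA hp1a
  generalize ξ1 ⬝ᵥ η1 = u11 at *
  generalize ξ1 ⬝ᵥ η2 = u12 at *
  generalize ξ1 ⬝ᵥ η3 = u13 at *
  generalize ξ2 ⬝ᵥ η1 = u21 at *
  generalize ξ2 ⬝ᵥ η2 = u22 at *
  generalize ξ2 ⬝ᵥ η3 = u23 at *
  generalize ξ3 ⬝ᵥ η1 = u31 at *
  generalize ξ3 ⬝ᵥ η2 = u32 at *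
  generalize ξ3 ⬝ᵥ η3 = u33 at *
  generalize ξ1 i = x1
  generalize ξ2 i = x2
  generalize ξ3 i = x3
  -- Keeping `D` atomic lets `field_simp` clear it before it is expanded.
  field_simp
  rw [hD]
  ring

lemma kdvProj_eq_of_smul {N : ℕ} {a b : ℂ} (ha : a ≠ 0) (hb : b ≠ 0) {x y w z : Fin N → ℂ}
    (hx : a • x = b • w) (hy : a • y = b • z) : kdvProj x y = kdvProj w z := by
  have key : ∀ {c : ℂ}, c ≠ 0 → ∀ v v' : Fin N → ℂ, kdvProj (c • v) (c • v') = kdvProj v v' := by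
    intro c hc v v'
    simp only [kdvProj, smul_dotProduct, dotProduct_smul, vecMulVec_smul, smul_vecMulVec,
      smul_smul, smul_eq_mul]
    congr 1
    rw [mul_inv, mul_inv]
    field_simp
  rw [← key ha, hx, hy, key hb]

/-- The matrix-KdV two-soliton map satisfies the Yang–Baxter relation at the level of
rank-one projectors: the chains `R₂₃(λ₂,λ₃) R₁₃(λ₁,λ₃) R₁₂(λ₁,λ₂)` and
`R₁₂(λ₁,λ₂) R₁₃(λ₁,λ₃) R₂₃(λ₂,λ₃)` produce, in each of the three slots, pairs whose
associated projectors `ξ⊗η/⟨ξ,η⟩` coincide. -/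
theorem kdv_yang_baxter {N : ℕ} (l1 l2 l3 : ℂ)
    (h12 : l1 ≠ l2) (h13 : l1 ≠ l3) (h23 : l2 ≠ l3)
    (ξ1 η1 ξ2 η2 ξ3 η3 : Fin N → ℂ)
    (hp1 : ξ1 ⬝ᵥ η1 ≠ 0) (hp2 : ξ2 ⬝ᵥ η2 ≠ 0) (hp3 : ξ3 ⬝ᵥ η3 ≠ 0)
    -- first chain: R₁₂, then R₁₃, then R₂₃
    (ξ1a η1a ξ2a η2a ξ1b η1b ξ3a η3a ξ2b η2b ξ3b η3b : Fin N → ℂ)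
    (e1 : ((ξ1a, η1a), (ξ2a, η2a)) = kdvR l1 l2 ξ1 η1 ξ2 η2)
    (hp1a : ξ1a ⬝ᵥ η1a ≠ 0)
    (e2 : ((ξ1b, η1b), (ξ3a, η3a)) = kdvR l1 l3 ξ1a η1a ξ3 η3)
    (hp2a : ξ2a ⬝ᵥ η2a ≠ 0) (hp3a : ξ3a ⬝ᵥ η3a ≠ 0)
    (e3 : ((ξ2b, η2b), (ξ3b, η3b)) = kdvR l2 l3 ξ2a η2a ξ3a η3a)
    -- second chain: R₂₃, then R₁₃, then R₁₂
    (ξ2c η2c ξ3c η3c ξ1c η1c ξ3d η3d ξ1d η1d ξ2d η2d : Fin N → ℂ)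
    (f1 : ((ξ2c, η2c), (ξ3c, η3c)) = kdvR l2 l3 ξ2 η2 ξ3 η3)
    (hp3c : ξ3c ⬝ᵥ η3c ≠ 0)
    (f2 : ((ξ1c, η1c), (ξ3d, η3d)) = kdvR l1 l3 ξ1 η1 ξ3c η3c)
    (hp1c : ξ1c ⬝ᵥ η1c ≠ 0) (hp2c : ξ2c ⬝ᵥ η2c ≠ 0)
    (f3 : ((ξ1d, η1d), (ξ2d, η2d)) = kdvR l1 l2 ξ1c η1c ξ2c η2c) :
    kdvProj ξ1b η1b = kdvProj ξ1d η1d ∧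
    kdvProj ξ2b η2b = kdvProj ξ2d η2d ∧
    kdvProj ξ3b η3b = kdvProj ξ3d η3d := by
  rw [kdvR_eq] at e1 e2 e3 f1 f2 f3
  simp only [Prod.mk.injEq] at e1 e2 e3 f1 f2 f3
  obtain ⟨⟨hξ1a, hη1a⟩, hξ2a, hη2a⟩ := e1
  obtain ⟨⟨hξ1b, hη1b⟩, hξ3a, hη3a⟩ := e2
  obtain ⟨⟨hξ2b, hη2b⟩, hξ3b, hη3b⟩ := e3
  obtain ⟨⟨hξ2c, hη2c⟩, hξ3c, hη3c⟩ := f1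
  obtain ⟨⟨hξ1c, hη1c⟩, hξ3d, hη3d⟩ := f2
  obtain ⟨⟨hξ1d, hη1d⟩, hξ2d, hη2d⟩ := f3
  -- The `η`-statements are the `ξ`-statements with the two families interchanged.
  have tr : ∀ {x y : Fin N → ℂ}, x ⬝ᵥ y ≠ 0 → y ⬝ᵥ x ≠ 0 := fun h => by
    rwa [dotProduct_comm]
  refine ⟨?_, ?_, ?_⟩
  · have hx : ξ1b = ξ1d := by
      rw [hξ1b, hξ1d, hξ1c, hξ1a, hξ2c, hη2c]
      subst hξ3c hη3c
      exact (dress_exchange h23.symm h13 h12 ξ1 ξ3 η3 ξ2 η2 hp3 hp2 hp3c).symm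
    have hy : η1b = η1d := by
      rw [hη1b, hη1d, hη1c, hη1a, hξ2c, hη2c]
      subst hξ3c hη3c
      exact (dress_exchange h23.symm h13 h12 η1 η3 ξ3 η2 ξ2 (tr hp3) (tr hp2) (tr hp3c)).symm
    rw [hx, hy]
  · have bx := smul_dress_eq_middle h12 h13 h23 ξ1 η1 ξ2 η2 ξ3 η3 ξ1a η1a ξ2a ξ3a η3a hp1 hp2 hp3
      hξ1a hη1a hξ2a hξ3a hη3a hp1a hp3a
    have ey := smul_dress_eq_middle h12 h13 h23 η1 ξ1 η2 ξ2 η3 ξ3 η1a ξ1a η2a η3a ξ3a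
      (tr hp1) (tr hp2) (tr hp3) hη1a hξ1a hη2a hη3a hξ3a (tr hp1a) (tr hp3a)
    have dx := smul_dress_eq_middle h23.symm h13.symm h12.symm ξ3 η3 ξ2 η2 ξ1 η1 ξ3c η3c ξ2c ξ1c η1c
      hp3 hp2 hp1 hξ3c hη3c hξ2c hξ1c hη1c hp3c hp1c
    have dy := smul_dress_eq_middle h23.symm h13.symm h12.symm η3 ξ3 η2 ξ2 η1 ξ1 η3c ξ3c η2c η1c ξ1c
      (tr hp3) (tr hp2) (tr hp1) hη3c hξ3c hη2c hη1c hξ1c (tr hp3c) (tr hp1c)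
    rw [← hξ2b] at bx
    rw [← hη2b, dotProduct_comm η3a, dotProduct_comm η3] at ey
    rw [← hξ2d, middle_symm] at dx
    rw [← hη2d, middle_symm, dotProduct_comm η1c, dotProduct_comm η1] at dy
    exact (kdvProj_eq_of_smul hp3a hp3 bx ey).trans (kdvProj_eq_of_smul hp1c hp1 dx dy).symm
  · have hx : ξ3b = ξ3d := by
      rw [hξ3b, hξ3d, hξ3c, hξ3a, hξ2a, hη2a]
      subst hξ1a hη1a
      exact dress_exchange h12 h13.symm h23.symm ξ3 ξ1 η1 ξ2 η2 hp1 hp2 hp1a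
    have hy : η3b = η3d := by
      rw [hη3b, hη3d, hη3c, hη3a, hξ2a, hη2a]
      subst hξ1a hη1a
      exact dress_exchange h12 h13.symm h23.symm η3 η1 ξ1 η2 ξ2 (tr hp1) (tr hp2) (tr hp1a)
    rw [hx, hy]
end

section
/- The matrix A(P,λ;ζ) = I + (2λ/(ζ−λ))·P is a Lax matrix for the matrix-KdV two-soliton map: let λ₁ ≠ λ₂, let (ξ₁,η₁;ξ₂,η₂) with ⟨ξ₁,η₁⟩ ≠ 0, ⟨ξ₂,η₂⟩ ≠ 0, let (ξ̃₁,η̃₁;ξ̃₂,η̃₂) = R(λ₁,λ₂)(ξ₁,η₁;ξ₂,η₂), and assume ⟨ξ̃₁,η̃₁⟩ ≠ 0 and ⟨ξ̃₂,η̃₂⟩ ≠ 0. Set P_i = (ξ_i⊗η_i)/⟨ξ_i,η_i⟩ and P̃_i = (ξ̃_i⊗η̃_i)/⟨ξ̃_i,η̃_i⟩. Then for every ζ ∈ ℂ with ζ ≠ λ₁ and ζ ≠ λ₂, one has the N×N matrix identity (I + (2λ₁/(ζ−λ₁))P₁)(I + (2λ₂/(ζ−λ₂))P₂) = (I + (2λ₂/(ζ−λ₂))P̃₂)(I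 + (2λ₁/(ζ−λ₁))P̃₁). -/
/-!
Write `a = ⟨ξ₁,η₁⟩`, `b = ⟨ξ₂,η₂⟩`, `c = ⟨ξ₁,η₂⟩`, `d = ⟨ξ₂,η₁⟩` and
`k = 1 + 4 λ₁ λ₂ c d / ((λ₁ - λ₂)² a b)`. The map multiplies both diagonal pairings by the same
factor: `⟨ξ̃₁,η̃₁⟩ = a k` and `⟨ξ̃₂,η̃₂⟩ = b k`, so the nondegeneracy of the image says `k ≠ 0`.
A product of two rank-one perturbations of the identity is explicit (`one_add_kdvProj_mul`), and
both sides of the Lax equation become the identity plus a combination of the four dyads `ξᵢ⊗ηⱼ`.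
Comparing them is an identity of rational functions in `a, b, c, d, λ₁, λ₂, ζ`, in which the only
denominators are `a`, `b`, `k`, `λ₁ - λ₂`, `ζ - λ₁` and `ζ - λ₂` (`kdv_scalar`).
-/

open Matrix

lemma one_add_kdvProj_mul {N : ℕ} (s t : ℂ) (ξ η ξ' η' : Fin N → ℂ) (i j : Fin N) :
    (((1 : Matrix (Fin N) (Fin N) ℂ) + s • kdvProj ξ η) * (1 + t • kdvProj ξ' η')) i j
      = (1 : Matrix (Fin N) (Fin N) ℂ) i j
        + (s / (ξ ⬝ᵥ η) * (ξ i * η j) + t / (ξ' ⬝ᵥ η') * (ξ' i * η' j)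
          + s * t * (ξ' ⬝ᵥ η) / ((ξ ⬝ᵥ η) * (ξ' ⬝ᵥ η')) * (ξ i * η' j)) := by
  simp only [kdvProj, mul_add, add_mul, one_mul, mul_one, smul_mul_assoc, mul_smul_comm,
    vecMulVec_mul_vecMulVec, Matrix.add_apply, Matrix.smul_apply, vecMulVec_apply, smul_eq_mul,
    Pi.smul_apply, dotProduct_comm η ξ']
  simp only [div_eq_mul_inv, mul_inv]
  ring

/-- The Lax equation on one matrix entry, where `x₁, x₂` are coordinates of `ξ₁, ξ₂` and
`y₁, y₂` are coordinates of `η₁, η₂`. The only pairing in the product `P̃₂ P̃₁` is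
`⟨ξ̃₁,η̃₂⟩ = -c k`. -/
lemma kdv_scalar (l1 l2 z a b c d k x1 x2 y1 y2 : ℂ) (h : l1 - l2 ≠ 0)
    (ha : a ≠ 0) (hb : b ≠ 0) (hk : k ≠ 0) (hz1 : z - l1 ≠ 0) (hz2 : z - l2 ≠ 0)
    (hkd : k = 1 + 4 * l1 * l2 * (c * d) / ((l1 - l2) ^ 2 * (a * b))) :
    2 * l1 / (z - l1) / a * (x1 * y1) + 2 * l2 / (z - l2) / b * (x2 * y2)
        + 2 * l1 / (z - l1) * (2 * l2 / (z - l2)) * d / (a * b) * (x1 * y2)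
      = 2 * l2 / (z - l2) / (b * k)
          * ((x2 + 2 * l1 * d / ((l2 - l1) * a) * x1) * (y2 + 2 * l1 * c / ((l2 - l1) * a) * y1))
        + 2 * l1 / (z - l1) / (a * k)
          * ((x1 + 2 * l2 * c / ((l1 - l2) * b) * x2) * (y1 + 2 * l2 * d / ((l1 - l2) * b) * y2))
        + 2 * l2 / (z - l2) * (2 * l1 / (z - l1)) * (-(c * k)) / (b * k * (a * k))
          * ((x2 + 2 * l1 * d / ((l2 - l1) * a) * x1)
            * (y1 + 2 * l2 * d / ((l1 - l2) * b) * y2)) := by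
  have h' : l2 - l1 ≠ 0 := by rw [← neg_sub]; exact neg_ne_zero.mpr h
  -- After multiplication by `k` the right-hand side no longer involves `k`.
  apply mul_right_cancel₀ hk
  trans 2 * l2 / (z - l2) / b
          * ((x2 + 2 * l1 * d / ((l2 - l1) * a) * x1) * (y2 + 2 * l1 * c / ((l2 - l1) * a) * y1))
        + 2 * l1 / (z - l1) / a
          * ((x1 + 2 * l2 * c / ((l1 - l2) * b) * x2) * (y1 + 2 * l2 * d / ((l1 - l2) * b) * y2))
        - 2 * l2 / (z - l2) * (2 * l1 / (z - l1)) * c / (b * a)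
          * ((x2 + 2 * l1 * d / ((l2 - l1) * a) * x1)
            * (y1 + 2 * l2 * d / ((l1 - l2) * b) * y2))
  · rw [hkd, ← neg_sub l1 l2]
    field_simp
    ring
  · field_simp
    ring

/-- `A(P,λ;ζ) = I + (2λ/(ζ−λ))·P` is a Lax matrix for the matrix-KdV two-soliton map:
if `(ξ̃₁,η̃₁;ξ̃₂,η̃₂) = R(λ₁,λ₂)(ξ₁,η₁;ξ₂,η₂)` then
`A(P₁,λ₁;ζ) A(P₂,λ₂;ζ) = A(P̃₂,λ₂;ζ) A(P̃₁,λ₁;ζ)` for every `ζ ≠ λ₁, λ₂`. -/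
theorem kdv_lax {N : ℕ} (l1 l2 : ℂ) (h : l1 ≠ l2)
    (ξ1 η1 ξ2 η2 : Fin N → ℂ)
    (hp1 : ξ1 ⬝ᵥ η1 ≠ 0) (hp2 : ξ2 ⬝ᵥ η2 ≠ 0)
    (ξ1t η1t ξ2t η2t : Fin N → ℂ)
    (he : ((ξ1t, η1t), (ξ2t, η2t)) = kdvR l1 l2 ξ1 η1 ξ2 η2)
    (hp1t : ξ1t ⬝ᵥ η1t ≠ 0) (hp2t : ξ2t ⬝ᵥ η2t ≠ 0) :
    ∀ zeta : ℂ, zeta ≠ l1 → zeta ≠ l2 →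
      ((1 : Matrix (Fin N) (Fin N) ℂ) + (2 * l1 / (zeta - l1)) • kdvProj ξ1 η1)
          * ((1 : Matrix (Fin N) (Fin N) ℂ) + (2 * l2 / (zeta - l2)) • kdvProj ξ2 η2)
        = ((1 : Matrix (Fin N) (Fin N) ℂ) + (2 * l2 / (zeta - l2)) • kdvProj ξ2t η2t)
          * ((1 : Matrix (Fin N) (Fin N) ℂ) + (2 * l1 / (zeta - l1)) • kdvProj ξ1t η1t) := by
  intro z hz1 hz2
  simp only [kdvR, Prod.mk.injEq] at he
  obtain ⟨⟨rfl, rfl⟩, rfl, rfl⟩ := he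
  have hl : l1 - l2 ≠ 0 := sub_ne_zero.mpr h
  have hl' : l2 - l1 ≠ 0 := sub_ne_zero.mpr h.symm
  have hz1' := sub_ne_zero.mpr hz1
  have hz2' := sub_ne_zero.mpr hz2
  ext i j
  rw [one_add_kdvProj_mul, one_add_kdvProj_mul]
  simp only [dotProduct_add, add_dotProduct, smul_dotProduct, dotProduct_smul, smul_eq_mul,
    Pi.add_apply, Pi.smul_apply] at hp1t hp2t ⊢
  generalize ξ1 ⬝ᵥ η1 = a at *
  generalize ξ2 ⬝ᵥ η2 = b at *
  generalize ξ1 ⬝ᵥ η2 = c at *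
  generalize ξ2 ⬝ᵥ η1 = d at *
  obtain ⟨k, hk⟩ : ∃ k, k = 1 + 4 * l1 * l2 * (c * d) / ((l1 - l2) ^ 2 * (a * b)) := ⟨_, rfl⟩
  have e1 : a + 2 * l2 * c / ((l1 - l2) * b) * d
      + 2 * l2 * d / ((l1 - l2) * b) * (c + 2 * l2 * c / ((l1 - l2) * b) * b) = a * k := by
    rw [hk]
    field_simp
    ring
  have e2 : b + 2 * l1 * d / ((l2 - l1) * a) * c
      + 2 * l1 * c / ((l2 - l1) * a) * (d + 2 * l1 * d / ((l2 - l1) * a) * a) = b * k := by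
    rw [hk, ← neg_sub l2 l1]
    field_simp
    ring
  have e3 : c + 2 * l2 * c / ((l1 - l2) * b) * b
      + 2 * l1 * c / ((l2 - l1) * a) * (a + 2 * l2 * c / ((l1 - l2) * b) * d) = -(c * k) := by
    rw [hk, ← neg_sub l1 l2]
    field_simp
    ring
  rw [e1] at hp1t
  rw [e1, e2, e3, kdv_scalar l1 l2 z a b c d k _ _ _ _ hl hp1 hp2
    (right_ne_zero_of_mul hp1t) hz1' hz2' hk]
end

section
/- The matrix-KdV two-soliton map is reversible at the level of rank-one projectors: let λ₁ ≠ λ₂, ⟨ξ₁,η₁⟩ ≠ 0, ⟨ξ₂,η₂⟩ ≠ 0, let (ξ̃₁,η̃₁;ξ̃₂,η̃₂) = R(λ₁,λ₂)(ξ₁,η₁;ξ₂,η₂), and assume ⟨ξ̃₁,η̃₁⟩ ≠ 0 and ⟨ξ̃₂,η̃₂⟩ ≠ 0. Let (ξ̂₂,η̂₂;ξ̂₁,η̂₁) = R(λ₂,λ₁)(ξ̃₂,η̃₂;ξ̃₁,η̃₁), assuming the pairings in its denominators are nonzero. Then ⟨ξ̂₁,η̂₁⟩ ≠ 0, ⟨ξ̂₂,η̂₂⟩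 ≠ 0 and the rank-one projectors are restored: (ξ̂₁⊗η̂₁)/⟨ξ̂₁,η̂₁⟩ = (ξ₁⊗η₁)/⟨ξ₁,η₁⟩ and (ξ̂₂⊗η̂₂)/⟨ξ̂₂,η̂₂⟩ = (ξ₂⊗η₂)/⟨ξ₂,η₂⟩; equivalently R₂₁(λ₂,λ₁) R(λ₁,λ₂) = Id on pairs of rank-one projectors. -/
/-!
Put `a = ⟨ξ₁,η₁⟩`, `b = ⟨ξ₂,η₂⟩`, `c = ⟨ξ₁,η₂⟩`, `d = ⟨ξ₂,η₁⟩` and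
`κ = 1 + 4 λ₁ λ₂ c d / ((λ₁ - λ₂)² a b)`. The map `R(λ₁,λ₂)` sends the Gram data `(a, b, c, d)` to
`(κ a, κ b, -κ c, -κ d)` (`kdv_pair_self` and `kdv_pair_cross`, the remaining cases following by
exchanging the two solitons). Hence `κ ≠ 0`, and the
coefficients of `R(λ₂,λ₁)` at the image are the ratios `-c/b`, `-d/b`, … of the original Gram data,
up to the factors in `λ`. Substituting, all mixed terms cancel and the composite map multiplies each
of the four vectors by `κ` (`kdv_restore`); rank-one projectors do not see this rescaling.
-/

open Matrix

/-- The factor by which `R₂₁(λ₂,λ₁) R(λ₁,λ₂)` rescales every vector and covector, in terms of the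
pairings `a = ⟨ξ₁,η₁⟩`, `b = ⟨ξ₂,η₂⟩`, `c = ⟨ξ₁,η₂⟩`, `d = ⟨ξ₂,η₁⟩`. -/
noncomputable def kdvFactor (l1 l2 a b c d : ℂ) : ℂ :=
  1 + 4 * l1 * l2 * c * d / ((l1 - l2) ^ 2 * a * b)

theorem kdvFactor_swap_solitons (l1 l2 a b c d : ℂ) :
    kdvFactor l2 l1 b a d c = kdvFactor l1 l2 a b c d := by
  unfold kdvFactor
  rw [show (l2 - l1) ^ 2 * b * a = (l1 - l2) ^ 2 * a * b by ring]
  ring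

theorem kdvFactor_swap_cross (l1 l2 a b c d : ℂ) :
    kdvFactor l1 l2 a b d c = kdvFactor l1 l2 a b c d := by
  unfold kdvFactor
  ring

theorem kdv_pair_self {N : ℕ} {l1 l2 : ℂ} (h : l1 - l2 ≠ 0) {x1 y1 x2 y2 : Fin N → ℂ}
    {a b c d : ℂ} (ha : a ≠ 0) (hb : b ≠ 0) (h11 : x1 ⬝ᵥ y1 = a) (h22 : x2 ⬝ᵥ y2 = b)
    (h12 : x1 ⬝ᵥ y2 = c) (h21 : x2 ⬝ᵥ y1 = d) :
    (x1 + (2 * l2 * c / ((l1 - l2) * b)) • x2) ⬝ᵥ (y1 + (2 * l2 * d / ((l1 - l2) * b)) • y2) =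
      kdvFactor l1 l2 a b c d * a := by
  simp only [add_dotProduct, dotProduct_add, smul_dotProduct, dotProduct_smul, smul_eq_mul,
    h11, h22, h12, h21, kdvFactor]
  field_simp
  ring

theorem kdv_pair_cross {N : ℕ} {l1 l2 : ℂ} (h : l1 - l2 ≠ 0) {x1 y1 x2 y2 : Fin N → ℂ}
    {a b c d : ℂ} (ha : a ≠ 0) (hb : b ≠ 0) (h11 : x1 ⬝ᵥ y1 = a) (h22 : x2 ⬝ᵥ y2 = b)
    (h12 : x1 ⬝ᵥ y2 = c) (h21 : x2 ⬝ᵥ y1 = d) :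
    (x1 + (2 * l2 * c / ((l1 - l2) * b)) • x2) ⬝ᵥ (y2 + (2 * l1 * c / ((l2 - l1) * a)) • y1) =
      -(kdvFactor l1 l2 a b c d * c) := by
  rw [← neg_sub l1 l2]
  simp only [add_dotProduct, dotProduct_add, smul_dotProduct, dotProduct_smul, smul_eq_mul,
    h11, h22, h12, h21, kdvFactor]
  field_simp
  ring

/-- The second application of the map, with the transformed pairings `-κ c` and `κ b` in its
coefficient, brings `x₁` back up to the factor `κ`. The same identity serves covectors, with `c` and
`d` exchanged. -/
theorem kdv_restore {N : ℕ} {l1 l2 : ℂ} (h : l1 - l2 ≠ 0) (x1 x2 : Fin N → ℂ)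
    {a b c d k : ℂ} (ha : a ≠ 0) (hb : b ≠ 0) (hk : kdvFactor l1 l2 a b c d = k) (hk0 : k ≠ 0) :
    (x1 + (2 * l2 * c / ((l1 - l2) * b)) • x2) +
      (2 * l2 * -(k * c) / ((l1 - l2) * (k * b))) • (x2 + (2 * l1 * d / ((l2 - l1) * a)) • x1) =
      k • x1 := by
  -- The factor must cancel in the coefficient before `k` is expanded.
  have hc : 2 * l2 * -(k * c) / ((l1 - l2) * (k * b)) = -(2 * l2 * c / ((l1 - l2) * b)) := by
    field_simp
  rw [hc, ← hk, ← neg_sub l1 l2]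
  ext i
  simp only [Pi.add_apply, Pi.smul_apply, smul_eq_mul, kdvFactor]
  field_simp
  ring

theorem kdvProj_smul_smul {N : ℕ} {k : ℂ} (hk : k ≠ 0) (x y : Fin N → ℂ) :
    kdvProj (k • x) (k • y) = kdvProj x y := by
  unfold kdvProj
  simp only [smul_dotProduct, dotProduct_smul, smul_vecMulVec, vecMulVec_smul, smul_smul,
    smul_eq_mul]
  congr 1
  rw [mul_inv, mul_inv]
  field_simp

/-- The matrix-KdV two-soliton map is reversible at the level of rank-one projectors:
applying `R(λ₂,λ₁)` to the swapped output of `R(λ₁,λ₂)` restores the projectors,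
i.e. `R₂₁(λ₂,λ₁) R(λ₁,λ₂) = Id` on pairs of rank-one projectors. -/
theorem kdv_reversible {N : ℕ} (l1 l2 : ℂ) (h : l1 ≠ l2)
    (ξ1 η1 ξ2 η2 : Fin N → ℂ)
    (hp1 : ξ1 ⬝ᵥ η1 ≠ 0) (hp2 : ξ2 ⬝ᵥ η2 ≠ 0)
    (ξ1t η1t ξ2t η2t : Fin N → ℂ)
    (he : ((ξ1t, η1t), (ξ2t, η2t)) = kdvR l1 l2 ξ1 η1 ξ2 η2)
    (hp1t : ξ1t ⬝ᵥ η1t ≠ 0) (hp2t : ξ2t ⬝ᵥ η2t ≠ 0)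
    (ξ2h η2h ξ1h η1h : Fin N → ℂ)
    (hf : ((ξ2h, η2h), (ξ1h, η1h)) = kdvR l2 l1 ξ2t η2t ξ1t η1t) :
    ξ1h ⬝ᵥ η1h ≠ 0 ∧ ξ2h ⬝ᵥ η2h ≠ 0 ∧
    kdvProj ξ1h η1h = kdvProj ξ1 η1 ∧
    kdvProj ξ2h η2h = kdvProj ξ2 η2 := by
  have hd : l1 - l2 ≠ 0 := sub_ne_zero.mpr h
  have hd' : l2 - l1 ≠ 0 := sub_ne_zero.mpr h.symm
  simp only [kdvR, Prod.mk.injEq] at he hf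
  obtain ⟨⟨e1, f1⟩, e2, f2⟩ := he
  obtain ⟨⟨g2, k2⟩, g1, k1⟩ := hf
  obtain ⟨a, ha⟩ : ∃ a, ξ1 ⬝ᵥ η1 = a := ⟨_, rfl⟩
  obtain ⟨b, hb⟩ : ∃ b, ξ2 ⬝ᵥ η2 = b := ⟨_, rfl⟩
  obtain ⟨c, hc⟩ : ∃ c, ξ1 ⬝ᵥ η2 = c := ⟨_, rfl⟩
  obtain ⟨d, hdd⟩ : ∃ d, ξ2 ⬝ᵥ η1 = d := ⟨_, rfl⟩
  have a0 : a ≠ 0 := ha ▸ hp1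
  have b0 : b ≠ 0 := hb ▸ hp2
  rw [hc, hb] at e1
  rw [hdd, hb] at f1
  rw [hdd, ha] at e2
  rw [hc, ha] at f2
  obtain ⟨k, hk⟩ : ∃ k, kdvFactor l1 l2 a b c d = k := ⟨_, rfl⟩
  have hks : kdvFactor l2 l1 b a d c = k := (kdvFactor_swap_solitons ..).trans hk
  have hkc : kdvFactor l1 l2 a b d c = k := (kdvFactor_swap_cross ..).trans hk
  have hksc : kdvFactor l2 l1 b a c d = k := (kdvFactor_swap_cross ..).trans hks
  have p11 : ξ1t ⬝ᵥ η1t = k * a := by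
    rw [e1, f1, kdv_pair_self hd a0 b0 ha hb hc hdd, hk]
  have p22 : ξ2t ⬝ᵥ η2t = k * b := by
    rw [e2, f2, kdv_pair_self hd' b0 a0 hb ha hdd hc, hks]
  have p12 : ξ1t ⬝ᵥ η2t = -(k * c) := by
    rw [e1, f2, kdv_pair_cross hd a0 b0 ha hb hc hdd, hk]
  have p21 : ξ2t ⬝ᵥ η1t = -(k * d) := by
    rw [e2, f1, kdv_pair_cross hd' b0 a0 hb ha hdd hc, hks]
  have k0 : k ≠ 0 := left_ne_zero_of_mul (p11 ▸ hp1t)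
  rw [p21, p11, e1, e2, kdv_restore hd' ξ2 ξ1 b0 a0 hks k0] at g2
  rw [p12, p11, f1, f2, kdv_restore hd' η2 η1 b0 a0 hksc k0] at k2
  rw [p12, p22, e1, e2, kdv_restore hd ξ1 ξ2 a0 b0 hk k0] at g1
  rw [p21, p22, f1, f2, kdv_restore hd η1 η2 a0 b0 hkc k0] at k1
  subst g1 g2 k1 k2
  refine ⟨?_, ?_, kdvProj_smul_smul k0 _ _, kdvProj_smul_smul k0 _ _⟩
  · simp [ha, a0, k0]
  · simp [hb, b0, k0]
end

section
/- The geometric-crystal map admits a genuine Lax representation with cyclic two-diagonal matrices: for x ∈ ℂⁿ and ζ ∈ ℂ, let L(x,ζ) be the n×n complex matrix with entries L_{jj} = x_j for j = 1,…,n, L_{j,j−1} = −1 for j = 2,…,n, L_{1,n} = −ζ, and all other entries zero. Then for all x, y ∈ ℂⁿ with P_j ≠ 0 for all j and (x̃, ỹ) = R(x,y), and for every ζ ∈ ℂ, one has the matrix identity L(y,ζ) · L(x,ζ) = L(x̃,ζ) · L(ỹ,ζ). -/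
/-!
The two products agree because of two identities for `P`. The diagonal entries only need
`x̃_j ỹ_j = x_j y_j`, which is immediate from the definition of `R`. The subdiagonal entries
need `x̃_{j+1} + ỹ_j = x_j + y_{j+1}`. To see this, note that `x_{j+1} P_{j+1} - y_{j+1} P_j`
telescopes to `∏ x - ∏ y` (`crys_telescope`), where both products run over one full period
and hence do not depend on `j` (`crys_period`). Comparing this at two consecutive indices gives
`(x_j + y_{j+1}) P_j = y_j P_{j-1} + x_{j+1} P_{j+1}`, and one divides by `P_j`.
To read off the entries, `L(x,ζ)` is written for `n ≥ 2` as a diagonal matrix plus a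
weighted cyclic shift `C` (`crysL_eq`); the two sides then share the term `C²`.
For `n = 1` the map `R` is the identity, and `1 × 1` matrices commute.
-/

/-- `P_j = Σ_{a=1}^n (∏_{k=1}^{a−1} x_{j+k}) (∏_{k=a+1}^{n} y_{j+k})`, indices mod `n`. -/
noncomputable def crysP (n : ℕ) [NeZero n] (x y : ZMod n → ℂ) (j : ZMod n) : ℂ :=
  ∑ a ∈ Finset.Icc 1 n,
    (∏ k ∈ Finset.Icc 1 (a - 1), x (j + (k : ZMod n))) *
      (∏ k ∈ Finset.Icc (a + 1) n, y (j + (k : ZMod n)))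

/-- The geometric-crystal map `R : (x,y) ↦ (x̃,ỹ)`,
`x̃_j = x_j P_j / P_{j−1}`, `ỹ_j = y_j P_{j−1} / P_j`. -/
noncomputable def crysR (n : ℕ) [NeZero n] (x y : ZMod n → ℂ) :
    (ZMod n → ℂ) × (ZMod n → ℂ) :=
  (fun j => x j * crysP n x y j / crysP n x y (j - 1),
   fun j => y j * crysP n x y (j - 1) / crysP n x y j)

/-- The cyclic two-diagonal matrix `L(x,ζ)`: diagonal entries `x_j`, entries `−1` at
positions `(j, j−1)` for `j = 2,…,n`, and entry `−ζ` at position `(1, n)`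
(indices written mod `n`, paper index `m` corresponding to `(m : ZMod n)`). -/
noncomputable def crysL (n : ℕ) [NeZero n] (x : ZMod n → ℂ) (zeta : ℂ) :
    Matrix (ZMod n) (ZMod n) ℂ :=
  Matrix.of fun i k =>
    if i = k then x i
    else if k = i - 1 then (if i = 1 then -zeta else -1)
    else 0

/-- A product over one full period of `ZMod n` does not depend on its starting point. -/
lemma crys_period (n : ℕ) (x : ZMod n → ℂ) (j : ZMod n) :
    ∏ k ∈ Finset.Ico 1 (n + 1), x (j + (k : ZMod n)) =
      ∏ k ∈ Finset.Ico 2 (n + 2), x (j + (k : ZMod n)) := by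
  rcases Nat.eq_zero_or_pos n with rfl | hn
  · simp
  rw [Finset.prod_eq_prod_Ico_succ_bot (by omega : 1 < n + 1),
    Finset.prod_Ico_succ_top (by omega : 2 ≤ n + 1)]
  simp [mul_comm]

lemma crysP_eq_Ico (n : ℕ) [NeZero n] (x y : ZMod n → ℂ) (j : ZMod n) :
    crysP n x y j = ∑ a ∈ Finset.Ico 1 (n + 1),
      (∏ k ∈ Finset.Ico 1 a, x (j + (k : ZMod n))) *
        (∏ k ∈ Finset.Ico (a + 1) (n + 1), y (j + (k : ZMod n))) := by
  unfold crysP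
  refine Finset.sum_congr (by ext; simp) fun a ha => ?_
  have h1 : Finset.Icc 1 (a - 1) = Finset.Ico 1 a := by
    ext; simp at ha ⊢; omega
  have h2 : Finset.Icc (a + 1) n = Finset.Ico (a + 1) (n + 1) := by
    ext; simp
  rw [h1, h2]

lemma crys_shift (n : ℕ) (x : ZMod n → ℂ) (j : ZMod n) (a b : ℕ) :
    ∏ k ∈ Finset.Ico a b, x (j + 1 + (k : ZMod n)) =
      ∏ k ∈ Finset.Ico (a + 1) (b + 1), x (j + (k : ZMod n)) := by
  rw [← Finset.prod_Ico_add' (fun k : ℕ => x (j + (k : ZMod n)))]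
  refine Finset.prod_congr rfl fun k _ => ?_
  push_cast
  congr 1
  ring

/-- With `T a = (x_{j+1} ⋯ x_{j+a-1}) (y_{j+a+1} ⋯ y_{j+n+1})`, the first term on the left is
the sum of `T (a + 1)` and the second the sum of `T a`, both over `1 ≤ a ≤ n`; the right-hand
side is `T (n + 1) - T 1`. -/
lemma crys_telescope (n : ℕ) [NeZero n] (x y : ZMod n → ℂ) (j : ZMod n) :
    x (j + 1) * crysP n x y (j + 1) - y (j + 1) * crysP n x y j =
      ∏ k ∈ Finset.Ico 1 (n + 1), x (j + (k : ZMod n)) -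
        ∏ k ∈ Finset.Ico 2 (n + 2), y (j + (k : ZMod n)) := by
  set T : ℕ → ℂ := fun a => (∏ k ∈ Finset.Ico 1 a, x (j + (k : ZMod n))) *
    (∏ k ∈ Finset.Ico (a + 1) (n + 2), y (j + (k : ZMod n))) with hT
  have h1 : x (j + 1) * crysP n x y (j + 1) = ∑ a ∈ Finset.Ico 1 (n + 1), T (a + 1) := by
    rw [crysP_eq_Ico, Finset.mul_sum]
    refine Finset.sum_congr rfl fun a ha => ?_
    have ha' := Finset.mem_Ico.1 ha
    rw [crys_shift, crys_shift, hT]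
    dsimp only
    rw [Finset.prod_eq_prod_Ico_succ_bot (by omega : 1 < a + 1)]
    push_cast
    ring
  have h2 : y (j + 1) * crysP n x y j = ∑ a ∈ Finset.Ico 1 (n + 1), T a := by
    rw [crysP_eq_Ico, Finset.mul_sum]
    refine Finset.sum_congr rfl fun a ha => ?_
    have ha' := Finset.mem_Ico.1 ha
    rw [hT]
    dsimp only
    rw [Finset.prod_Ico_succ_top (by omega : a + 1 ≤ n + 1)]
    have : ((n + 1 : ℕ) : ZMod n) = 1 := by simp
    rw [this]
    ring
  rw [h1, h2, ← Finset.sum_sub_distrib, Finset.sum_Ico_sub T (by omega : 1 ≤ n + 1)]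
  simp [hT]

lemma crysP_relation (n : ℕ) [NeZero n] (x y : ZMod n → ℂ) (j : ZMod n) :
    (x j + y (j + 1)) * crysP n x y j =
      y j * crysP n x y (j - 1) + x (j + 1) * crysP n x y (j + 1) := by
  have h1 := crys_telescope n x y j
  have h2 := crys_telescope n x y (j - 1)
  have hx := crys_shift n x (j - 1) 1 (n + 1)
  have hy := crys_shift n y (j - 1) 2 (n + 2)
  have hy' := crys_shift n y (j - 1) 1 (n + 1)
  have px := crys_period n x (j - 1)
  have py := crys_period n y j
  simp only [sub_add_cancel] at h2 hx hy hy'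
  linear_combination h2 - h1 + px - hx - py + hy'

/-- The weighted cyclic shift, i.e. the off-diagonal part of `L(x,ζ)`. -/
noncomputable def crysC (n : ℕ) (zeta : ℂ) : Matrix (ZMod n) (ZMod n) ℂ :=
  Matrix.of fun i k => if k = i - 1 then (if i = 1 then -zeta else -1) else 0

/-- For `n = 1` and `ζ ≠ 0` this fails: the shift then lands on the diagonal, where `crysL` ignores it. -/
lemma crysL_eq (n : ℕ) [NeZero n] (hn : n ≠ 1) (x : ZMod n → ℂ) (zeta : ℂ) :
    crysL n x zeta = Matrix.diagonal x + crysC n zeta := by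
  have : Nontrivial (ZMod n) := ZMod.nontrivial_iff.2 hn
  ext i k
  simp only [crysL, crysC, Matrix.of_apply, Matrix.add_apply, Matrix.diagonal_apply]
  by_cases h : i = k
  · subst h
    have h1 : i ≠ i - 1 := fun h => one_ne_zero (sub_eq_self.1 h.symm)
    simp [h1]
  · simp [h]

/-- The geometric-crystal map admits a genuine Lax representation:
`L(y,ζ) L(x,ζ) = L(x̃,ζ) L(ỹ,ζ)` whenever `(x̃,ỹ) = R(x,y)`. -/
theorem crys_lax (n : ℕ) [NeZero n] (x y : ZMod n → ℂ)
    (hP : ∀ j, crysP n x y j ≠ 0)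
    (xt yt : ZMod n → ℂ) (he : (xt, yt) = crysR n x y) :
    ∀ zeta : ℂ, crysL n y zeta * crysL n x zeta = crysL n xt zeta * crysL n yt zeta := by
  intro zeta
  simp only [crysR, Prod.mk.injEq] at he
  obtain ⟨hxt, hyt⟩ := he
  rcases eq_or_ne n 1 with rfl | hn
  · have h0 : ∀ j : ZMod 1, j - 1 = j := fun j => Subsingleton.elim _ _
    have ex : xt = x := by
      rw [hxt]; funext j; rw [h0, mul_div_cancel_right₀ _ (hP j)]
    have ey : yt = y := by
      rw [hyt]; funext j; rw [h0, mul_div_cancel_right₀ _ (hP j)]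
    rw [ex, ey]
    ext i k
    have : Unique (ZMod 1) := ⟨⟨0⟩, fun _ => Subsingleton.elim _ _⟩
    rw [Matrix.mul_apply, Matrix.mul_apply, Fintype.sum_subsingleton _ i,
      Fintype.sum_subsingleton _ i, Subsingleton.elim k i, mul_comm]
  · have hprod : ∀ j, xt j * yt j = y j * x j := by
      intro j
      have h1 := hP j
      have h2 := hP (j - 1)
      rw [hxt, hyt]
      field_simp
    have hsum : ∀ i, xt i + yt (i - 1) = x (i - 1) + y i := by
      intro i
      have h1 := hP (i - 1)
      have h := crysP_relation n x y (i - 1)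
      rw [sub_add_cancel] at h
      rw [hxt, hyt]
      field_simp
      linear_combination -h
    simp only [crysL_eq n hn, add_mul, mul_add, Matrix.diagonal_mul_diagonal, hprod]
    have hmid : crysC n zeta * Matrix.diagonal x + Matrix.diagonal y * crysC n zeta =
        crysC n zeta * Matrix.diagonal yt + Matrix.diagonal xt * crysC n zeta := by
      ext i k
      simp only [Matrix.add_apply, Matrix.mul_diagonal, Matrix.diagonal_mul]
      by_cases h : k = i - 1
      · subst h
        linear_combination -(crysC n zeta i (i - 1)) * hsum i
      · simp [crysC, h]
    calc _ = Matrix.diagonal (fun j => y j * x j) + crysC n zeta * crysC n zeta +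
          (crysC n zeta * Matrix.diagonal x + Matrix.diagonal y * crysC n zeta) := by abel
      _ = _ := by rw [hmid]; abel
end

section
/- The geometric-crystal map satisfies the Yang–Baxter relation: let x, y, z ∈ ℂⁿ, and apply the map R to the pairs in slots (1,2), then (1,3), then (2,3) of the triple (x,y,z), obtaining (x₂,y₁), then (x₂₃,z₁), then (y₁₃,z₁₂); and along the other chain apply R to slots (2,3), then (1,3), then (1,2), obtaining (y₃,z₂), then (x₃,z₁₂′), then (x₂₃′,y₁₃′); assume all the quantities P_j arising in denominators along both chains are nonzero. Then x₂₃ = x₂₃′, y₁₃ = y₁₃′ and z₁₂ = z₁₂′, i.e. R₂₃ R₁₃ R₁₂ = R₁₂ R₁₃ R₂₃ on (ℂⁿ)³ wherever both sides are defined. -/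
/-! ### Refactorization by `R` -/

/-- The window `c, c + 1, …, c + n - 1` runs once through `ZMod n`. -/
lemma prod_window (n : ℕ) [NeZero n] (f : ZMod n → ℂ) (c : ZMod n) :
    ∏ i ∈ Finset.range n, f (c + (i : ZMod n)) = ∏ j, f j := by
  refine Finset.prod_bij (fun i _ => c + (i : ZMod n)) (by simp) ?_ ?_ (by simp)
  · intro a ha b hb hab
    have h := (ZMod.natCast_eq_natCast_iff a b n).1 (add_left_cancel hab)
    exact Nat.ModEq.eq_of_lt_of_lt h (Finset.mem_range.1 ha) (Finset.mem_range.1 hb)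
  · intro b _
    exact ⟨(b - c).val, Finset.mem_range.2 (ZMod.val_lt _), by simp⟩

lemma prod_Icc_one (m : ℕ) (f : ℕ → ℂ) :
    ∏ k ∈ Finset.Icc 1 m, f k = ∏ i ∈ Finset.range m, f (i + 1) := by
  induction m with
  | zero => simp
  | succ m ih => rw [Finset.prod_Icc_succ_top (by omega), ih, Finset.prod_range_succ]

/-- Multiplication by `x_j`, respectively `y_j`, completes every term of `P_j`, respectively
`P_{j-1}`, to a term of one common sequence, shifted by one place between the two sums. -/
lemma crysP_rec (n : ℕ) [NeZero n] (x y : ZMod n → ℂ) (j : ZMod n) :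
    x j * crysP n x y j - y j * crysP n x y (j - 1) = ∏ i, x i - ∏ i, y i := by
  -- Both products are sums of consecutive values of `Q`, so their difference telescopes.
  let Q : ℕ → ℂ := fun b =>
    (∏ i ∈ Finset.range b, x (j + (i : ZMod n))) *
      ∏ k ∈ Finset.Icc (b + 1) n, y (j + (k : ZMod n))
  have hx : x j * crysP n x y j = ∑ i ∈ Finset.range n, Q (i + 1) := by
    rw [crysP, Finset.mul_sum, Finset.range_eq_Ico, Finset.sum_Ico_add' Q 0 n 1]
    refine Finset.sum_congr (by ext; simp) fun a ha => ?_
    obtain ⟨b, rfl⟩ : ∃ b, a = b + 1 := ⟨a - 1, by simp at ha; omega⟩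
    simp only [Q, Nat.add_sub_cancel]
    rw [prod_Icc_one b (fun k => x (j + (k : ZMod n))), Finset.prod_range_succ']
    simp only [Nat.cast_zero, add_zero]
    ring
  have hy : y j * crysP n x y (j - 1) = ∑ i ∈ Finset.range n, Q i := by
    have e : ∑ i ∈ Finset.range n, Q i = ∑ a ∈ Finset.Icc 1 n, Q (a - 1) := by
      rw [Finset.range_eq_Ico]
      have := Finset.sum_Ico_add' (fun a => Q (a - 1)) 0 n 1
      simp only [Nat.add_sub_cancel] at this
      rw [this]
      exact Finset.sum_congr (by ext; simp) fun _ _ => rfl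
    rw [crysP, Finset.mul_sum, e]
    refine Finset.sum_congr rfl fun a ha => ?_
    obtain ⟨b, rfl⟩ : ∃ b, a = b + 1 := ⟨a - 1, by simp at ha; omega⟩
    obtain ⟨m, hm⟩ : ∃ m, n = m + 1 := ⟨n - 1, by simp at ha; omega⟩
    have hbm : b + 1 ≤ m + 1 := by simp at ha; omega
    simp only [Q, Nat.add_sub_cancel]
    rw [prod_Icc_one b (fun k => x (j - 1 + (k : ZMod n)))]
    have h1 : ∀ i : ℕ, j - 1 + ((i + 1 : ℕ) : ZMod n) = j + (i : ZMod n) := by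
      intro i; push_cast; ring
    simp only [h1]
    have h2 : y j * ∏ k ∈ Finset.Icc (b + 1 + 1) n, y (j - 1 + (k : ZMod n)) =
        ∏ k ∈ Finset.Icc (b + 1) n, y (j + (k : ZMod n)) := by
      have h3 : ∏ k ∈ Finset.Icc (b + 1 + 1) n, y (j - 1 + (k : ZMod n)) =
          ∏ k ∈ Finset.Icc (b + 1) m, y (j + (k : ZMod n)) := by
        have := Finset.prod_Ico_add' (fun k : ℕ => y (j - 1 + (k : ZMod n))) (b + 1) (m + 1) 1
        simp only [h1] at this
        have e1 : Finset.Icc (b + 1) m = Finset.Ico (b + 1) (m + 1) := by ext; simp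
        have e2 : Finset.Icc (b + 1 + 1) n = Finset.Ico (b + 1 + 1) (m + 1 + 1) := by
          ext; simp; omega
        rw [e1, e2, this]
      have h4 : Finset.Icc (b + 1) n = insert n (Finset.Icc (b + 1) m) := by
        ext; simp; omega
      rw [h3, h4, Finset.prod_insert (by simp; omega)]
      simp
    rw [← h2]
    ring
  rw [hx, hy, ← Finset.sum_sub_distrib, Finset.sum_range_sub]
  simp only [Q]
  rw [prod_window, Finset.Icc_eq_empty (by omega), zero_add,
    prod_Icc_one n (fun k => y (j + (k : ZMod n))), ← prod_window n y (j + 1)]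
  simp only [Finset.prod_empty, mul_one, Finset.range_zero, one_mul]
  congr 1
  exact Finset.prod_congr rfl fun i _ => by congr 1; push_cast; ring

/-- The map `R` refactors `L x * L y` as `L v * L u`, where `L x = x + T` with `T` the shift, and
carries the products of the entries along. -/
lemma crysR_spec (n : ℕ) [NeZero n] {x y u v : ZMod n → ℂ} (h : ∀ j, crysP n x y j ≠ 0)
    (e : (u, v) = crysR n x y) :
    (∀ j, v j * u j = x j * y j) ∧ (∀ j, v j + u (j + 1) = x j + y (j + 1)) ∧
      ∏ j, u j = ∏ j, x j ∧ ∏ j, v j = ∏ j, y j := by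
  simp only [crysR, Prod.mk.injEq] at e
  obtain ⟨rfl, rfl⟩ := e
  have hs : ∏ j, crysP n x y (j - 1) = ∏ j, crysP n x y j :=
    (Equiv.subRight (1 : ZMod n)).prod_comp (crysP n x y)
  have hp : ∏ j, crysP n x y j ≠ 0 := Finset.prod_ne_zero_iff.2 fun j _ => h j
  refine ⟨fun j => ?_, fun j => ?_, ?_, ?_⟩
  · have := h j
    have := h (j - 1)
    field_simp
  · have a := crysP_rec n x y j
    have b := crysP_rec n x y (j + 1)
    rw [add_sub_cancel_right] at b
    have := h j
    simp only [add_sub_cancel_right]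
    field_simp
    linear_combination b - a
  · rw [Finset.prod_div_distrib, Finset.prod_mul_distrib, hs, mul_div_cancel_right₀ _ hp]
  · rw [Finset.prod_div_distrib, Finset.prod_mul_distrib, hs, mul_div_cancel_right₀ _ hp]

/-! ### Uniqueness of factorizations -/

/-- Going once around the cycle multiplies `w` by `∏ p` on one side and by `∏ q` on the other. -/
lemma cyclic_rec_zero (n : ℕ) [NeZero n] {p q w : ZMod n → ℂ}
    (h : ∀ j, p j * w j = q j * w (j + 1)) (hpq : ∏ j, p j ≠ ∏ j, q j) (j : ZMod n) : w j = 0 := by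
  have key : ∀ m : ℕ, (∏ i ∈ Finset.range m, p (j + (i : ZMod n))) * w j =
      (∏ i ∈ Finset.range m, q (j + (i : ZMod n))) * w (j + (m : ZMod n)) := by
    intro m
    induction m with
    | zero => simp
    | succ m ih =>
      have hm := h (j + (m : ZMod n))
      rw [Finset.prod_range_succ, Finset.prod_range_succ]
      push_cast
      rw [← add_assoc]
      linear_combination p (j + (m : ZMod n)) * ih +
        (∏ i ∈ Finset.range m, q (j + (i : ZMod n))) * hm
  have hn := key n
  rw [prod_window, prod_window, ZMod.natCast_self, add_zero] at hn
  have h0 : (∏ j, p j - ∏ j, q j) * w j = 0 := by linear_combination hn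
  exact (mul_eq_zero.1 h0).resolve_left (sub_ne_zero.2 hpq)

/-- Uniqueness of the factorization `L c * L b * L a` with prescribed, distinct products of the
entries. The hypotheses `h0`, `h1`, `h2` compare the coefficients of `1`, `T`, `T ^ 2`. -/
lemma factor_unique (n : ℕ) [NeZero n] {a b c a' b' c' : ZMod n → ℂ}
    (h0 : ∀ j, c j * b j * a j = c' j * b' j * a' j)
    (h1 : ∀ j, c j * b j + (c j + b (j + 1)) * a (j + 1) =
      c' j * b' j + (c' j + b' (j + 1)) * a' (j + 1))
    (h2 : ∀ j, c j + b (j + 1) + a (j + 1 + 1) = c' j + b' (j + 1) + a' (j + 1 + 1))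
    (hb : ∏ j, b' j = ∏ j, b j) (hc : ∏ j, c' j = ∏ j, c j)
    (hab : ∏ j, a j ≠ ∏ j, b j) (hac : ∏ j, a j ≠ ∏ j, c j) (hbc : ∏ j, b j ≠ ∏ j, c j) :
    a = a' ∧ b = b' ∧ c = c' := by
  have hv := cyclic_rec_zero n (p := c') (q := a)
    (w := fun j => b' j * (a' j - a j) - a j * (a' (j + 1) - a (j + 1)))
    (fun j => by linear_combination -h0 j + a j * h1 j - a j * a (j + 1) * h2 j)
    (by rw [hc]; exact hac.symm)
  have hu := cyclic_rec_zero n (p := b') (q := a) (w := fun j => a' j - a j)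
    (fun j => sub_eq_zero.1 (hv j)) (by rw [hb]; exact hab.symm)
  have ha : a = a' := funext fun j => (sub_eq_zero.1 (hu j)).symm
  subst ha
  have g1 : ∀ j, c j + b (j + 1) = c' j + b' (j + 1) := fun j => by linear_combination h2 j
  have g0 : ∀ j, c j * b j = c' j * b' j := fun j => by
    linear_combination h1 j - a (j + 1) * g1 j
  have hw := cyclic_rec_zero n (p := c') (q := b) (w := fun j => b' j - b j)
    (fun j => by linear_combination -g0 j + b j * g1 j) (by rw [hc]; exact hbc.symm)
  have hbb : b = b' := funext fun j => (sub_eq_zero.1 (hw j)).symm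
  subst hbb
  exact ⟨rfl, rfl, funext fun j => by linear_combination g1 j⟩

/-- The Yang–Baxter relation for triples whose three products of entries are distinct. -/
lemma yang_baxter_of_prod_ne (n : ℕ) [NeZero n]
    {x y z x2 y1 x23 z1 y13 z12 y3 z2 x3 z12' x23' y13' : ZMod n → ℂ}
    (h1 : ∀ j, crysP n x y j ≠ 0) (e1 : (x2, y1) = crysR n x y)
    (h2 : ∀ j, crysP n x2 z j ≠ 0) (e2 : (x23, z1) = crysR n x2 z)
    (h3 : ∀ j, crysP n y1 z1 j ≠ 0) (e3 : (y13, z12) = crysR n y1 z1)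
    (h4 : ∀ j, crysP n y z j ≠ 0) (e4 : (y3, z2) = crysR n y z)
    (h5 : ∀ j, crysP n x z2 j ≠ 0) (e5 : (x3, z12') = crysR n x z2)
    (h6 : ∀ j, crysP n x3 y3 j ≠ 0) (e6 : (x23', y13') = crysR n x3 y3)
    (hxy : ∏ j, x j ≠ ∏ j, y j) (hxz : ∏ j, x j ≠ ∏ j, z j) (hyz : ∏ j, y j ≠ ∏ j, z j) :
    x23 = x23' ∧ y13 = y13' ∧ z12 = z12' := by
  obtain ⟨A0, A1, Au, Av⟩ := crysR_spec n h1 e1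
  obtain ⟨B0, B1, Bu, Bv⟩ := crysR_spec n h2 e2
  obtain ⟨C0, C1, Cu, Cv⟩ := crysR_spec n h3 e3
  obtain ⟨D0, D1, Du, Dv⟩ := crysR_spec n h4 e4
  obtain ⟨E0, E1, Eu, Ev⟩ := crysR_spec n h5 e5
  obtain ⟨F0, F1, Fu, Fv⟩ := crysR_spec n h6 e6
  -- Each coefficient of either factorization is compared with that of `L x * L y * L z`.
  apply factor_unique n
  · intro j
    linear_combination (x23 j * C0 j + y1 j * B0 j + z j * A0 j) -
      (z12' j * F0 j + y3 j * E0 j + x j * D0 j)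
  · intro j
    linear_combination (C0 j + x23 (j + 1) * C1 j + y1 j * B1 j + B0 (j + 1) + A0 j
      + z (j + 1) * A1 j) - (z12' j * F1 j + F0 (j + 1) + E0 j + y3 (j + 1) * E1 j
      + x j * D1 j + D0 (j + 1))
  · intro j
    linear_combination (C1 j + B1 (j + 1) + A1 j) - (F1 (j + 1) + E1 j + D1 (j + 1))
  · rw [Fv, Du, Cu, Av]
  · rw [Ev, Dv, Cv, Bv]
  · rw [Bu, Au, Cu, Av]; exact hxy
  · rw [Bu, Au, Cv, Bv]; exact hxz
  · rw [Cu, Av, Cv, Bv]; exact hyz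

/-! ### Passage to the limit -/

lemma crysP_continuous (n : ℕ) [NeZero n] (j : ZMod n) :
    Continuous fun p : (ZMod n → ℂ) × (ZMod n → ℂ) => crysP n p.1 p.2 j := by
  unfold crysP
  fun_prop

open Filter Topology in
/-- `R` is continuous at every pair where none of the `P_j` vanishes, and remains defined nearby. -/
lemma crysR_tendsto (n : ℕ) [NeZero n] {ι : Type*} {l : Filter ι} {X Y : ι → ZMod n → ℂ}
    {x y u v : ZMod n → ℂ} (hX : Tendsto X l (𝓝 x)) (hY : Tendsto Y l (𝓝 y))
    (h : ∀ j, crysP n x y j ≠ 0) (e : (u, v) = crysR n x y) :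
    Tendsto (fun t => (crysR n (X t) (Y t)).1) l (𝓝 u) ∧
      Tendsto (fun t => (crysR n (X t) (Y t)).2) l (𝓝 v) ∧
      ∀ᶠ t in l, ∀ j, crysP n (X t) (Y t) j ≠ 0 := by
  simp only [crysR, Prod.mk.injEq] at e
  obtain ⟨rfl, rfl⟩ := e
  have hP : ∀ j, Tendsto (fun t => crysP n (X t) (Y t) j) l (𝓝 (crysP n x y j)) := fun j => by
    have hc := (crysP_continuous n j).tendsto (x, y)
    rw [nhds_prod_eq] at hc
    have := hc.comp (hX.prodMk hY)
    exact this
  have hXj := tendsto_pi_nhds.1 hX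
  have hYj := tendsto_pi_nhds.1 hY
  refine ⟨tendsto_pi_nhds.2 fun j => ?_, tendsto_pi_nhds.2 fun j => ?_, ?_⟩
  · exact ((hXj j).mul (hP j)).div (hP (j - 1)) (h _)
  · exact ((hYj j).mul (hP (j - 1))).div (hP j) (h _)
  · exact eventually_all.2 fun j => (hP j).eventually_ne (h j)

open Polynomial in
/-- Distinct leading coefficients `α ^ n`, `β ^ n` keep two products of entries apart for all but
finitely many values of the parameter. -/
lemma eventually_prod_ne (n : ℕ) [NeZero n] (x y : ZMod n → ℂ) {α β : ℂ} (h : α ^ n ≠ β ^ n) :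
    ∀ᶠ t in nhdsWithin (0 : ℂ) {0}ᶜ, ∏ j, (x j + t * α) ≠ ∏ j, (y j + t * β) := by
  let lin : (ZMod n → ℂ) → ℂ → ℂ[X] := fun w γ => ∏ j, (C γ * X + C (w j))
  have hcoeff : ∀ w γ, (lin w γ).coeff n = γ ^ n := by
    intro w γ
    have := coeff_prod_of_natDegree_le (s := Finset.univ) (fun j => C γ * X + C (w j)) 1
      (fun j _ => natDegree_linear_le)
    simpa [ZMod.card] using this
  have heval : ∀ w γ t, (lin w γ).eval t = ∏ j, (w j + t * γ) := by
    intro w γ t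
    simp only [lin, eval_prod]
    exact Finset.prod_congr rfl fun j _ => by simp; ring
  have hne : lin x α - lin y β ≠ 0 := fun h0 => by
    have := congrArg (fun p => p.coeff n) h0
    simp only [coeff_sub, hcoeff, coeff_zero] at this
    exact h (sub_eq_zero.1 this)
  have hfin : {t | (lin x α - lin y β).IsRoot t}.Finite := finite_setOfPred_isRoot hne
  have hcl : ({t | (lin x α - lin y β).IsRoot t} \ {0})ᶜ ∈ nhds (0 : ℂ) :=
    (hfin.subset Set.sdiff_subset).isClosed.isOpen_compl.mem_nhds (by simp)
  filter_upwards [nhdsWithin_le_nhds hcl, self_mem_nhdsWithin] with t ht ht0 heq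
  refine ht ⟨?_, ht0⟩
  simp [IsRoot, heval, heq]

/-- The geometric-crystal map satisfies the Yang–Baxter relation
`R₂₃ R₁₃ R₁₂ = R₁₂ R₁₃ R₂₃` on `(ℂⁿ)³`, wherever both sides are defined. -/
theorem crys_yang_baxter (n : ℕ) [NeZero n]
    (x y z x2 y1 x23 z1 y13 z12 y3 z2 x3 z12' x23' y13' : ZMod n → ℂ)
    (h1 : ∀ j, crysP n x y j ≠ 0) (e1 : (x2, y1) = crysR n x y)
    (h2 : ∀ j, crysP n x2 z j ≠ 0) (e2 : (x23, z1) = crysR n x2 z)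
    (h3 : ∀ j, crysP n y1 z1 j ≠ 0) (e3 : (y13, z12) = crysR n y1 z1)
    (h4 : ∀ j, crysP n y z j ≠ 0) (e4 : (y3, z2) = crysR n y z)
    (h5 : ∀ j, crysP n x z2 j ≠ 0) (e5 : (x3, z12') = crysR n x z2)
    (h6 : ∀ j, crysP n x3 y3 j ≠ 0) (e6 : (x23', y13') = crysR n x3 y3) :
    x23 = x23' ∧ y13 = y13' ∧ z12 = z12' := by
  have curve : ∀ (w : ZMod n → ℂ) (γ : ℂ),
      Filter.Tendsto (fun (t : ℂ) j => w j + t * γ) (nhdsWithin 0 {0}ᶜ) (nhds w) := by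
    intro w γ
    have hc : Continuous fun (t : ℂ) j => w j + t * γ := by fun_prop
    simpa using (hc.tendsto 0).mono_left nhdsWithin_le_nhds
  have hn : n ≠ 0 := NeZero.ne n
  -- The directions `1, 2, 3` have distinct `n`-th powers since `n ≠ 0`.
  have pow_ne : ∀ a b : ℕ, a ≠ b → (a : ℂ) ^ n ≠ (b : ℂ) ^ n := fun a b hab h =>
    hab (Nat.pow_left_injective hn (by exact_mod_cast h))
  have hX := curve x (1 : ℕ)
  have hY := curve y (2 : ℕ)
  have hZ := curve z (3 : ℕ)
  obtain ⟨a1, b1, g1⟩ := crysR_tendsto n hX hY h1 e1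
  obtain ⟨a2, b2, g2⟩ := crysR_tendsto n a1 hZ h2 e2
  obtain ⟨a3, b3, g3⟩ := crysR_tendsto n b1 b2 h3 e3
  obtain ⟨a4, b4, g4⟩ := crysR_tendsto n hY hZ h4 e4
  obtain ⟨a5, b5, g5⟩ := crysR_tendsto n hX b4 h5 e5
  obtain ⟨a6, b6, g6⟩ := crysR_tendsto n a5 a4 h6 e6
  have key := ((((((((g1.and g2).and g3).and g4).and g5).and g6).and
    (eventually_prod_ne n x y (pow_ne 1 2 (by norm_num)))).and
    (eventually_prod_ne n x z (pow_ne 1 3 (by norm_num)))).and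
    (eventually_prod_ne n y z (pow_ne 2 3 (by norm_num)))).mono
    fun t ⟨⟨⟨⟨⟨⟨⟨⟨k1, k2⟩, k3⟩, k4⟩, k5⟩, k6⟩, kxy⟩, kxz⟩, kyz⟩ =>
      yang_baxter_of_prod_ne n k1 rfl k2 rfl k3 rfl k4 rfl k5 rfl k6 rfl kxy kxz kyz
  exact ⟨tendsto_nhds_unique_of_eventuallyEq a2 a6 (key.mono fun t h => h.1),
    tendsto_nhds_unique_of_eventuallyEq a3 b6 (key.mono fun t h => h.2.1),
    tendsto_nhds_unique_of_eventuallyEq b3 b5 (key.mono fun t h => h.2.2)⟩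
end
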